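/- arXiv:1906.10494 — 2 statements merged into one kernel-verified Lean document; each statement's English description precedes it below -/
import Mathlib

section
/- For all vectors v₁,…,v_k ∈ ℤ², if the sequential cone SeqCone(v₁,…,v_k) is not degenerate (i.e., not equal to {(0,0)}), then SeqCone(v₁,…,v_k) = Cone(u,v) for two vectors u, v ∈ ℤ² with nonnegative coordinates, each of which either belongs to {v₁,…,v_k}, or is horizontal, or is vertical. -/
/-- Integer vectors in the plane. -/
abbrev Vec2 : Type := ℤ × ℤ

/-- The norm of a vector: the maximum of the absolute values of its coordinates. -/
def vnorm (v : Vec2) : ℕ := max v.1.natAbs v.2.natAbs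

/-- A vector is positive if both coordinates are positive. -/
def Pos (v : Vec2) : Prop := 0 < v.1 ∧ 0 < v.2

/-- A vector is semi-positive if both coordinates are nonnegative and one is positive. -/
def SemiPos (v : Vec2) : Prop := 0 ≤ v.1 ∧ 0 ≤ v.2 ∧ (0 < v.1 ∨ 0 < v.2)

/-- A vector is vertical if it is of the form (0, a) with a > 0. -/
def Vert (v : Vec2) : Prop := v.1 = 0 ∧ 0 < v.2

/-- A vector is horizontal if it is of the form (a, 0) with a > 0. -/
def Horiz (v : Vec2) : Prop := 0 < v.1 ∧ v.2 = 0

/-- Embedding of integer vectors into the rational plane. -/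
def toQ (v : Vec2) : ℚ × ℚ := ((v.1 : ℚ), (v.2 : ℚ))

/-- The half-line (ray) ℚ≥0 · x generated by a rational vector x. -/
def rayQ (x : ℚ × ℚ) : Set (ℚ × ℚ) := {z | ∃ a : ℚ, 0 ≤ a ∧ z = a • x}

/-- The cone of a finite list of integer vectors: all nonnegative rational
linear combinations. -/
def Cone (vs : List Vec2) : Set (ℚ × ℚ) :=
  {x | ∃ a : Fin vs.length → ℚ, (∀ i, 0 ≤ a i) ∧ x = ∑ i, a i • toQ (vs.get i)}

/-- The sequential cone: nonnegative rational combinations all of whose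
partial sums are in the nonnegative orthant. -/
def SeqCone (vs : List Vec2) : Set (ℚ × ℚ) :=
  {x | ∃ a : Fin vs.length → ℚ, (∀ i, 0 ≤ a i) ∧
    (∀ k : ℕ, k ≤ vs.length →
      0 ≤ ∑ i : Fin vs.length, if (i : ℕ) < k then a i • toQ (vs.get i) else 0) ∧
    x = ∑ i, a i • toQ (vs.get i)}

/-- Two integer vectors are colinear if they generate the same half-line. -/
def Colinear (v w : Vec2) : Prop := rayQ (toQ v) = rayQ (toQ w)

/-- The clockwise relation on nonnegative vectors:
`Clk v u` iff u lies strictly clockwise from v. -/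
def Clk (v u : Vec2) : Prop := 0 < v.2 * u.1 - v.1 * u.2

/-!
Both edges of the sequential cone are followed as the vectors are adjoined one at a time. If the
current clockwise edge is spanned by `u`, adjoining `w` leaves it in place when `w` is not strictly
clockwise from `u`; otherwise the edge turns to `w` if `w` lies in the quadrant, and if it does not,
the segment from `u` in direction `w` leaves the quadrant through the horizontal axis, which becomes
the new edge. Reflection in the diagonal gives the counterclockwise edge, with the vertical axis in
place of the horizontal one, and Cramer's rule shows that a cone in the quadrant is generated by its
two edges.
-/

open Set PointedCone

section SequentialCone

variable (R : Type*) {E F : Type*} [Semiring R] [PartialOrder R] [IsOrderedRing R]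
  [AddCommMonoid E] [PartialOrder E] [IsOrderedAddMonoid E] [Module R E] [PosSMulMono R E]
  [AddCommMonoid F] [PartialOrder F] [IsOrderedAddMonoid F] [Module R F] [PosSMulMono R F]

variable {R} in
/-- The nonnegative points reached from `C` by one step along a nonnegative multiple of `w`. -/
def stepCone (C : PointedCone R E) (w : E) : PointedCone R E :=
  (C ⊔ hull R {w}) ⊓ positive R E

/-- The sequential cone of `f 0, …, f (n - 1)`, built one vector at a time: the endpoints of walks
with nonnegative steps along these vectors, in order, which stay nonnegative. -/
def sequentialCone (f : ℕ → E) : ℕ → PointedCone R E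
  | 0 => ⊥
  | n + 1 => stepCone (sequentialCone f n) (f n)

variable {R}

theorem mem_stepCone {C : PointedCone R E} {w x : E} :
    x ∈ stepCone C w ↔ 0 ≤ x ∧ ∃ s ∈ C, ∃ t : R, 0 ≤ t ∧ s + t • w = x := by
  simp [stepCone, Submodule.mem_sup, Submodule.mem_span_singleton, and_comm]

theorem self_mem_stepCone (C : PointedCone R E) {w : E} (hw : 0 ≤ w) : w ∈ stepCone C w :=
  ⟨Submodule.mem_sup_right (subset_hull rfl), hw⟩

theorem le_stepCone {C : PointedCone R E} (hC : C ≤ positive R E) (w : E) : C ≤ stepCone C w :=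
  le_inf le_sup_left hC

theorem sequentialCone_le_positive (f : ℕ → E) : ∀ n, sequentialCone R f n ≤ positive R E
  | 0 => bot_le
  | _ + 1 => inf_le_right

theorem map_stepCone (e : E ≃ₗ[R] F) (he : ∀ x, 0 ≤ e x ↔ 0 ≤ x) (C : PointedCone R E) (w : E) :
    (stepCone C w).map (e : E →ₗ[R] F) = stepCone (C.map (e : E →ₗ[R] F)) (e w) := by
  ext y
  obtain ⟨x, rfl⟩ := e.surjective y
  simp [mem_stepCone, he, ← map_smul, ← map_add]

theorem map_sequentialCone (e : E ≃ₗ[R] F) (he : ∀ x, 0 ≤ e x ↔ 0 ≤ x) (f : ℕ → E) (n : ℕ) :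
    (sequentialCone R f n).map (e : E →ₗ[R] F) = sequentialCone R (e ∘ f) n := by
  induction n with
  | zero => exact Submodule.map_bot _
  | succ n ih => simp only [sequentialCone, map_stepCone e he, ih, Function.comp_apply]

theorem mem_sequentialCone_iff {f : ℕ → E} {n : ℕ} {x : E} :
    x ∈ sequentialCone R f n ↔ ∃ a : ℕ → R, (∀ i, 0 ≤ a i) ∧
      (∀ k ≤ n, 0 ≤ ∑ i ∈ Finset.range k, a i • f i) ∧
      x = ∑ i ∈ Finset.range n, a i • f i := by
  induction n generalizing x with
  | zero =>
    simp only [sequentialCone, Submodule.mem_bot, Finset.range_zero, Finset.sum_empty]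
    exact ⟨fun hx ↦ ⟨0, by simp, by simp, hx⟩, fun ⟨_, _, _, hx⟩ ↦ hx⟩
  | succ n ih =>
    rw [sequentialCone, mem_stepCone]
    constructor
    · rintro ⟨hx, s, hs, t, ht, rfl⟩
      obtain ⟨a, ha, hpartial, rfl⟩ := ih.1 hs
      have sum_update {k : ℕ} (hk : k ≤ n) :
          ∑ i ∈ Finset.range k, Function.update a n t i • f i =
            ∑ i ∈ Finset.range k, a i • f i :=
        Finset.sum_congr rfl fun i hi ↦ by
          rw [Function.update_of_ne ((Finset.mem_range.1 hi).trans_le hk).ne]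
      have total : ∑ i ∈ Finset.range n, a i • f i + t • f n =
          ∑ i ∈ Finset.range (n + 1), Function.update a n t i • f i := by
        rw [Finset.sum_range_succ, sum_update le_rfl, Function.update_self]
      refine ⟨Function.update a n t, fun i ↦ ?_, fun k hk ↦ ?_, total⟩
      · rcases eq_or_ne i n with rfl | hi <;> simp [*]
      · rcases Nat.le_succ_iff.1 hk with hk | rfl
        · exact sum_update hk ▸ hpartial k hk
        · exact total ▸ hx
    · rintro ⟨a, ha, hpartial, rfl⟩
      exact ⟨hpartial _ le_rfl, _,
        ih.2 ⟨a, ha, fun k hk ↦ hpartial k (Nat.le_succ_of_le hk), rfl⟩,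
        a n, ha n, (Finset.sum_range_succ _ n).symm⟩

theorem sum_fin_ite_lt {M : Type*} [AddCommMonoid M] (g : ℕ → M) {k n : ℕ} (hk : k ≤ n) :
    ∑ i : Fin n, (if (i : ℕ) < k then g i else 0) = ∑ i ∈ Finset.range k, g i := by
  rw [Fin.sum_univ_eq_sum_range (fun i ↦ if i < k then g i else 0), ← Finset.sum_filter]
  congr 1
  grind

theorem mem_sequentialCone_iff_fin {f : ℕ → E} {n : ℕ} {x : E} :
    x ∈ sequentialCone R f n ↔ ∃ a : Fin n → R, (∀ i, 0 ≤ a i) ∧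
      (∀ k ≤ n, 0 ≤ ∑ i : Fin n, if (i : ℕ) < k then a i • f i else 0) ∧
      x = ∑ i, a i • f i := by
  rw [mem_sequentialCone_iff]
  constructor
  · rintro ⟨a, ha, hpartial, rfl⟩
    refine ⟨fun i ↦ a i, fun i ↦ ha i, fun k hk ↦ ?_, (Fin.sum_univ_eq_sum_range _ n).symm⟩
    rw [sum_fin_ite_lt (fun i ↦ a i • f i) hk]
    exact hpartial k hk
  · rintro ⟨a, ha, hpartial, rfl⟩
    obtain ⟨b, hb, rfl⟩ : ∃ b : ℕ → R, (∀ i, 0 ≤ b i) ∧ (fun i : Fin n ↦ b i) = a :=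
      ⟨fun i ↦ if h : i < n then a ⟨i, h⟩ else 0, fun i ↦ by dsimp only; split <;> simp [ha],
        by simp⟩
    refine ⟨b, hb, fun k hk ↦ ?_, Fin.sum_univ_eq_sum_range (fun i ↦ b i • f i) n⟩
    rw [← sum_fin_ite_lt (fun i ↦ b i • f i) hk]
    exact hpartial k hk

end SequentialCone

section Plane

section CommRing

variable {K : Type*} [CommRing K]

/-- The determinant of two vectors of the plane, positive when `y` is strictly counterclockwise
from `x` in the nonnegative quadrant. -/
def planarCross (x y : K × K) : K := x.1 * y.2 - x.2 * y.1

theorem planarCross_add_smul (u s w : K × K) (t : K) :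
    planarCross u (s + t • w) = planarCross u s + t * planarCross u w := by
  simp only [planarCross, Prod.fst_add, Prod.snd_add, Prod.smul_fst, Prod.smul_snd, smul_eq_mul]
  ring

theorem planarCross_self (u : K × K) : planarCross u u = 0 := by
  simp only [planarCross]
  ring

theorem neg_planarCross (u v : K × K) : -planarCross u v = planarCross v u := by
  simp only [planarCross]
  ring

theorem planarCross_swap_swap (u v : K × K) : planarCross u.swap v.swap = planarCross v u := by
  simp only [planarCross, Prod.fst_swap, Prod.snd_swap]
  ring

theorem planarCross_cramer (u v x : K × K) :
    planarCross u v • x = planarCross x v • u + planarCross u x • v := by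
  ext <;>
  · simp only [planarCross, Prod.fst_add, Prod.snd_add, Prod.smul_fst, Prod.smul_snd, smul_eq_mul]
    ring

end CommRing

theorem eq_smul_add_smul_of_planarCross_ne_zero {K : Type*} [Field K] {u v : K × K}
    (h : planarCross u v ≠ 0) (x : K × K) :
    x = (planarCross x v / planarCross u v) • u + (planarCross u x / planarCross u v) • v := by
  rw [div_eq_inv_mul, div_eq_inv_mul, mul_smul, mul_smul, ← smul_add, ← planarCross_cramer,
    inv_smul_smul₀ h]

variable {K : Type*} [Field K] [LinearOrder K] [IsStrictOrderedRing K]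

theorem add_pos_of_nonneg_of_ne_zero {x : K × K} (hx : 0 ≤ x) (hx0 : x ≠ 0) : 0 < x.1 + x.2 := by
  refine (add_nonneg hx.1 hx.2).lt_of_ne' fun h ↦ hx0 ?_
  exact Prod.ext_iff.2 ((add_eq_zero_iff_of_nonneg hx.1 hx.2).1 h)

theorem planarCross_nonneg_of_nonpos {u w s : K × K} (hu : 0 ≤ u) (hu0 : u ≠ 0) (hw : 0 ≤ w)
    (hs : 0 ≤ s) (huw : planarCross u w ≤ 0) (hus : 0 ≤ planarCross u s) : 0 ≤ planarCross w s := by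
  refine nonneg_of_mul_nonneg_right ?_ (add_pos_of_nonneg_of_ne_zero hu hu0)
  have cramer : (u.1 + u.2) * planarCross w s =
      (w.1 + w.2) * planarCross u s - (s.1 + s.2) * planarCross u w := by
    simp only [planarCross]
    ring
  rw [cramer]
  exact sub_nonneg.2 <| (mul_nonpos_of_nonneg_of_nonpos (add_nonneg hs.1 hs.2) huw).trans
    (mul_nonneg (add_nonneg hw.1 hw.2) hus)

theorem mem_hull_singleton_of_planarCross_eq_zero {u x : K × K} (hu : 0 ≤ u) (hu0 : u ≠ 0)
    (hx : 0 ≤ x) (hux : planarCross u x = 0) : x ∈ hull K {u} := by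
  have hpos := add_pos_of_nonneg_of_ne_zero hu hu0
  have hx_eq : ((x.1 + x.2) / (u.1 + u.2)) • u = x := by
    rw [planarCross] at hux
    ext <;> simp only [Prod.smul_fst, Prod.smul_snd, smul_eq_mul] <;> field_simp <;> linarith
  rw [← hx_eq]
  exact (hull K {u}).smul_mem (div_nonneg (add_nonneg hx.1 hx.2) hpos.le) (subset_hull rfl)

theorem mem_hull_pair_of_planarCross_nonneg {u v x : K × K} (hu : 0 ≤ u) (hu0 : u ≠ 0)
    (hv : 0 ≤ v) (hv0 : v ≠ 0) (hx : 0 ≤ x) (huv : 0 ≤ planarCross u v)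
    (hux : 0 ≤ planarCross u x) (hxv : 0 ≤ planarCross x v) : x ∈ hull K {u, v} := by
  rcases huv.eq_or_lt with h | h
  · have hxu : 0 ≤ planarCross x u := by
      refine planarCross_nonneg_of_nonpos hv hv0 hx hu ?_ ?_
      · rw [← neg_planarCross]
        exact neg_nonpos.2 hxv
      · rw [← neg_planarCross, ← h, neg_zero]
    have hux0 : planarCross u x = 0 :=
      hux.antisymm' (neg_nonneg.1 (neg_planarCross u x ▸ hxu))
    exact Submodule.span_mono (singleton_subset_iff.2 (mem_insert u _))
      (mem_hull_singleton_of_planarCross_eq_zero hu hu0 hx hux0)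
  · rw [eq_smul_add_smul_of_planarCross_ne_zero h.ne' x]
    exact add_mem ((hull K _).smul_mem (div_nonneg hxv huv) (subset_hull (mem_insert u _)))
      ((hull K _).smul_mem (div_nonneg hux huv) (subset_hull (mem_insert_of_mem u rfl)))

/-- `u` spans the clockwise edge of `C`: all of `C` lies counterclockwise from `u ∈ C`. -/
structure IsClockwiseEdge (C : PointedCone K (K × K)) (u : K × K) : Prop where
  mem : u ∈ C
  ne_zero : u ≠ 0
  planarCross_nonneg : ∀ x ∈ C, 0 ≤ planarCross u x

namespace IsClockwiseEdge

variable {C : PointedCone K (K × K)} {u w : K × K}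

theorem stepCone_of_planarCross_nonneg (hu : IsClockwiseEdge C u) (hC : C ≤ positive K (K × K))
    (huw : 0 ≤ planarCross u w) : IsClockwiseEdge (stepCone C w) u where
  mem := le_stepCone hC w hu.mem
  ne_zero := hu.ne_zero
  planarCross_nonneg x hx := by
    obtain ⟨-, s, hs, t, ht, rfl⟩ := mem_stepCone.1 hx
    rw [planarCross_add_smul]
    exact add_nonneg (hu.planarCross_nonneg s hs) (mul_nonneg ht huw)

theorem stepCone_self (hw : 0 ≤ w) (hw0 : w ≠ 0) (hC : ∀ s ∈ C, 0 ≤ planarCross w s) :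
    IsClockwiseEdge (stepCone C w) w where
  mem := self_mem_stepCone C hw
  ne_zero := hw0
  planarCross_nonneg x hx := by
    obtain ⟨-, s, hs, t, -, rfl⟩ := mem_stepCone.1 hx
    rw [planarCross_add_smul, planarCross_self, mul_zero, add_zero]
    exact hC s hs

theorem stepCone_horizontal (hu : IsClockwiseEdge C u) (hC : C ≤ positive K (K × K))
    (huw : planarCross u w < 0) (hw : w.2 ≤ 0) : IsClockwiseEdge (stepCone C w) (1, 0) where
  mem := by
    refine mem_stepCone.2 ⟨by simp [Prod.le_def], _, C.smul_mem ?_ hu.mem, _, ?_,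
      (eq_smul_add_smul_of_planarCross_ne_zero huw.ne (1, 0)).symm⟩
    · exact div_nonneg_of_nonpos (by simpa [planarCross] using hw) huw.le
    · exact div_nonneg_of_nonpos (by simpa [planarCross] using (hC hu.mem).2) huw.le
  ne_zero := by simp
  planarCross_nonneg x hx := by simpa [planarCross] using (mem_stepCone.1 hx).1.2

theorem exists_stepCone (hu : IsClockwiseEdge C u) (hC : C ≤ positive K (K × K)) (w : K × K) :
    ∃ u', IsClockwiseEdge (stepCone C w) u' ∧ (u' = u ∨ u' = w ∨ u' = (1, 0)) := by
  have hu_nonneg : 0 ≤ u := hC hu.mem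
  rcases le_or_gt 0 (planarCross u w) with huw | huw
  · exact ⟨u, hu.stepCone_of_planarCross_nonneg hC huw, .inl rfl⟩
  rcases le_or_gt w.2 0 with hw2 | hw2
  · exact ⟨(1, 0), hu.stepCone_horizontal hC huw hw2, .inr (.inr rfl)⟩
  have hw1 : 0 ≤ w.1 := by
    by_contra! hw1
    refine huw.not_ge (sub_nonneg.2 ?_)
    exact (mul_nonpos_of_nonneg_of_nonpos hu_nonneg.2 hw1.le).trans
      (mul_nonneg hu_nonneg.1 hw2.le)
  have hw0 : w ≠ 0 := fun h ↦ hw2.ne' (congrArg Prod.snd h)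
  refine ⟨w, stepCone_self ⟨hw1, hw2.le⟩ hw0 fun s hs ↦ ?_, .inr (.inl rfl)⟩
  exact planarCross_nonneg_of_nonpos hu_nonneg hu.ne_zero ⟨hw1, hw2.le⟩ (hC hs) huw.le
    (hu.planarCross_nonneg s hs)

end IsClockwiseEdge

theorem stepCone_bot_eq_bot_or_isClockwiseEdge (w : K × K) :
    stepCone (⊥ : PointedCone K (K × K)) w = ⊥ ∨
      IsClockwiseEdge (stepCone (⊥ : PointedCone K (K × K)) w) w := by
  by_cases hw : 0 ≤ w ∧ w ≠ 0
  · refine .inr (.stepCone_self hw.1 hw.2 fun s hs ↦ ?_)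
    simp [(Submodule.mem_bot _).1 hs, planarCross]
  · refine .inl ((Submodule.eq_bot_iff _).2 fun x hx ↦ ?_)
    obtain ⟨hx_nonneg, s, hs, t, ht, rfl⟩ := mem_stepCone.1 hx
    obtain rfl := (Submodule.mem_bot _).1 hs
    rw [zero_add] at hx_nonneg ⊢
    by_contra hne
    obtain ⟨ht0, hw0⟩ := smul_ne_zero_iff.1 hne
    exact hw ⟨((positive K (K × K)).smul_mem_iff (ht.lt_of_ne' ht0)).1 hx_nonneg, hw0⟩

theorem sequentialCone_eq_bot_or_exists_isClockwiseEdge (f : ℕ → K × K) (n : ℕ) :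
    sequentialCone K f n = ⊥ ∨
      ∃ u, IsClockwiseEdge (sequentialCone K f n) u ∧ (u ∈ f '' Iio n ∨ u = (1, 0)) := by
  induction n with
  | zero => exact .inl rfl
  | succ n ih =>
    have mem_succ : f n ∈ f '' Iio (n + 1) := mem_image_of_mem f n.lt_succ_self
    rcases ih with h | ⟨u, hu, hu_mem⟩
    · rw [sequentialCone, h]
      exact (stepCone_bot_eq_bot_or_isClockwiseEdge (f n)).imp_right fun hw ↦
        ⟨f n, hw, .inl mem_succ⟩
    · obtain ⟨u', hu', h⟩ := hu.exists_stepCone (sequentialCone_le_positive f n) (f n)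
      refine .inr ⟨u', hu', ?_⟩
      rcases h with rfl | rfl | rfl
      · exact hu_mem.imp_left fun h ↦ image_mono (Iio_subset_Iio n.le_succ) h
      · exact .inl mem_succ
      · exact .inr rfl

/-- `v` spans the counterclockwise edge of `C`: all of `C` lies clockwise from `v ∈ C`. -/
structure IsCounterclockwiseEdge (C : PointedCone K (K × K)) (v : K × K) : Prop where
  mem : v ∈ C
  ne_zero : v ≠ 0
  planarCross_nonneg : ∀ x ∈ C, 0 ≤ planarCross x v

theorem IsCounterclockwiseEdge.of_map_swap {C : PointedCone K (K × K)} {v : K × K}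
    (hv : IsClockwiseEdge (C.map (LinearEquiv.prodComm K K K).toLinearMap) v.swap) :
    IsCounterclockwiseEdge C v where
  mem := by
    obtain ⟨x, hx, hxv⟩ := mem_map.1 hv.mem
    exact Prod.swap_injective hxv ▸ hx
  ne_zero h := hv.ne_zero (congrArg Prod.swap h)
  planarCross_nonneg x hx := by
    rw [← planarCross_swap_swap]
    exact hv.planarCross_nonneg _ (mem_map.2 ⟨x, hx, rfl⟩)

theorem sequentialCone_eq_bot_or_exists_isCounterclockwiseEdge (f : ℕ → K × K) (n : ℕ) :
    sequentialCone K f n = ⊥ ∨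
      ∃ v, IsCounterclockwiseEdge (sequentialCone K f n) v ∧ (v ∈ f '' Iio n ∨ v = (0, 1)) := by
  have mirror := map_sequentialCone (LinearEquiv.prodComm K K K)
    (by simp [Prod.le_def, and_comm]) f n
  rcases sequentialCone_eq_bot_or_exists_isClockwiseEdge (Prod.swap ∘ f) n with h | ⟨u, hu, hu_mem⟩
  · left
    exact Submodule.map_injective_of_injective Prod.swap_injective
      ((mirror.trans h).trans (Submodule.map_bot _).symm)
  · refine .inr ⟨u.swap, .of_map_swap (mirror ▸ hu), ?_⟩
    rcases hu_mem with ⟨i, hi, rfl⟩ | rfl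
    · exact .inl ⟨i, hi, rfl⟩
    · exact .inr rfl

theorem IsClockwiseEdge.eq_hull_pair {C : PointedCone K (K × K)} {u v : K × K}
    (hu : IsClockwiseEdge C u) (hv : IsCounterclockwiseEdge C v) (hC : C ≤ positive K (K × K)) :
    C = hull K {u, v} := by
  refine le_antisymm (fun x hx ↦ ?_) (Submodule.span_le.2 (pair_subset hu.mem hv.mem))
  exact mem_hull_pair_of_planarCross_nonneg (hC hu.mem) hu.ne_zero (hC hv.mem) hv.ne_zero (hC hx)
    (hu.planarCross_nonneg v hv.mem) (hu.planarCross_nonneg x hx) (hv.planarCross_nonneg x hx)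

theorem seqCone_eq_cone_of_two_general (f : ℕ → K × K) (n : ℕ) (h : sequentialCone K f n ≠ ⊥) :
    ∃ u v : K × K, 0 ≤ u ∧ 0 ≤ v ∧
      sequentialCone K f n = hull K {u, v} ∧
      (u ∈ f '' Iio n ∨ u = (1, 0)) ∧
      (v ∈ f '' Iio n ∨ v = (0, 1)) := by
  obtain ⟨u, hu, hu_mem⟩ := (sequentialCone_eq_bot_or_exists_isClockwiseEdge f n).resolve_left h
  obtain ⟨v, hv, hv_mem⟩ :=
    (sequentialCone_eq_bot_or_exists_isCounterclockwiseEdge f n).resolve_left h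
  have hpos := sequentialCone_le_positive (R := K) f n
  exact ⟨u, v, hpos hu.mem, hpos hv.mem, hu.eq_hull_pair hv hpos, hu_mem, hv_mem⟩

end Plane

theorem seqCone_eq_sequentialCone (vs : List Vec2) :
    SeqCone vs = sequentialCone ℚ (fun i ↦ toQ (vs.getD i 0)) vs.length := by
  ext x
  rw [SetLike.mem_coe, mem_sequentialCone_iff_fin]
  simp [SeqCone]

theorem cone_eq_hull (vs : List Vec2) : Cone vs = hull ℚ (toQ '' {v | v ∈ vs}) := by
  ext x
  rw [SetLike.mem_coe, ← range_list_get, ← range_comp, Submodule.mem_span_range_iff_exists_fun]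
  constructor
  · rintro ⟨a, ha, rfl⟩
    exact ⟨fun i ↦ ⟨a i, ha i⟩, rfl⟩
  · rintro ⟨a, rfl⟩
    exact ⟨fun i ↦ a i, fun i ↦ (a i).2, rfl⟩

theorem cone_pair_eq_hull (u v : Vec2) : Cone [u, v] = hull ℚ {toQ u, toQ v} := by
  have mem_pair : {w | w ∈ [u, v]} = {u, v} := by ext; simp
  rw [cone_eq_hull, mem_pair, image_pair]

theorem toQ_nonneg {u : Vec2} : 0 ≤ toQ u ↔ 0 ≤ u :=
  Int.cast_nonneg_iff.and Int.cast_nonneg_iff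

theorem exists_toQ_eq_of_mem_image_or_eq {vs : List Vec2} {x : ℚ × ℚ} {e : Vec2}
    (hx : x ∈ (fun i ↦ toQ (vs.getD i 0)) '' Iio vs.length ∨ x = toQ e) :
    ∃ v, toQ v = x ∧ (v ∈ vs ∨ v = e) := by
  rcases hx with ⟨i, hi, rfl⟩ | rfl
  · refine ⟨vs.getD i 0, rfl, .inl ?_⟩
    rw [List.getD_eq_getElem vs 0 hi]
    exact List.getElem_mem hi
  · exact ⟨e, rfl, .inr rfl⟩

/-- If the sequential cone of `v₁, …, v_k` is not degenerate
(i.e. not equal to `{(0,0)}`), then it equals the cone of two vectors `u, v`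
with nonnegative coordinates, each of which either occurs among `v₁, …, v_k`,
or is horizontal, or is vertical. -/
theorem seqCone_eq_cone_of_two (vs : List Vec2) (h : SeqCone vs ≠ {(0 : ℚ × ℚ)}) :
    ∃ u v : Vec2, (0 : Vec2) ≤ u ∧ (0 : Vec2) ≤ v ∧
      SeqCone vs = Cone [u, v] ∧
      (u ∈ vs ∨ Horiz u ∨ Vert u) ∧
      (v ∈ vs ∨ Horiz v ∨ Vert v) := by
  obtain ⟨x, y, hx, hy, hcone, hx_mem, hy_mem⟩ :=
    seqCone_eq_cone_of_two_general (fun i ↦ toQ (vs.getD i 0)) vs.length fun h_bot ↦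
      h (by rw [seqCone_eq_sequentialCone, h_bot, Submodule.bot_coe])
  obtain ⟨u, rfl, hu⟩ :=
    exists_toQ_eq_of_mem_image_or_eq (e := (1, 0)) (by simpa [toQ] using hx_mem)
  obtain ⟨v, rfl, hv⟩ :=
    exists_toQ_eq_of_mem_image_or_eq (e := (0, 1)) (by simpa [toQ] using hy_mem)
  refine ⟨u, v, toQ_nonneg.1 hx, toQ_nonneg.1 hy, ?_,
    hu.imp_right (by rintro rfl; exact .inl ⟨one_pos, rfl⟩),
    hv.imp_right (by rintro rfl; exact .inr ⟨rfl, one_pos⟩)⟩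
  rw [seqCone_eq_sequentialCone, hcone, cone_pair_eq_hull]
end

section
/- Thin-Thick Dichotomy: there exists a polynomial p with natural-number coefficients such that for every 2-VASS V with n control states and norm M, every (0,0)-run of V is either p(nM)ⁿ-thin or p(nM)ⁿ-thick. -/
/-- Projection of a vector on coordinate `j` (`Fin 2` indexes the two coordinates). -/
def proj (j : Fin 2) (v : Vec2) : ℤ := if j = 0 then v.1 else v.2

/-! ### 2-dimensional vector addition systems with states (2-VASS) -/

/-- A transition of a 2-VASS with control states `Fin n`:
a source state, an effect vector, and a target state. -/
abbrev Transition (n : ℕ) : Type := Fin n × Vec2 × Fin n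

/-- A 2-VASS with control states `Fin n` is a finite set of transitions. -/
abbrev VASS (n : ℕ) : Type := Finset (Transition n)

/-- The norm of a 2-VASS: the largest norm of an effect of a transition. -/
def vassNorm {n : ℕ} (V : VASS n) : ℕ := V.sup (fun t => vnorm t.2.1)

/-- The effect of a sequence of transitions: the sum of the individual effects. -/
def effect {n : ℕ} (π : List (Transition n)) : Vec2 := (π.map (fun t => t.2.1)).sum

/-- A path of `V`: a sequence of transitions of `V` in which
consecutive control states match. -/
def IsPath {n : ℕ} (V : VASS n) (π : List (Transition n)) : Prop :=
  (∀ t ∈ π, t ∈ V) ∧ π.Chain' (fun s t => s.2.2 = t.1)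

/-- The path `π` starts at control state `q` (vacuously true for the empty path). -/
def startsAt {n : ℕ} (π : List (Transition n)) (q : Fin n) : Prop :=
  ∀ t ∈ π.head?, t.1 = q

/-- The control state after the first `i` transitions of `π`, for a path
starting at control state `q`. -/
def stateAt {n : ℕ} (π : List (Transition n)) (q : Fin n) (i : ℕ) : Fin n :=
  (((π.take i).getLast?).map (fun t => t.2.2)).getD q

/-- The final control state of a path `π` starting at control state `q`. -/
def endState {n : ℕ} (π : List (Transition n)) (q : Fin n) : Fin n := stateAt π q π.length

/-- The counter values after the first `i` transitions of `π`, starting from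
counter values `u`. -/
def vecAt {n : ℕ} (π : List (Transition n)) (u : Vec2) (i : ℕ) : Vec2 :=
  u + effect (π.take i)

/-- The path `π` is enabled in the configuration `(q, u)`: it starts at `q`
and all intermediate counter values are nonnegative. -/
def Enabled {n : ℕ} (π : List (Transition n)) (q : Fin n) (u : Vec2) : Prop :=
  startsAt π q ∧ ∀ i ≤ π.length, 0 ≤ vecAt π u i

/-- For `j ∈ {1,2}`, the path `π` is `{j}`-enabled in the configuration `(q, u)`:
it starts at `q` and the `j`-th coordinate of all intermediate counter values is
nonnegative. -/
def JEnabled {n : ℕ} (π : List (Transition n)) (q : Fin n) (u : Vec2) (j : Fin 2) : Prop :=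
  startsAt π q ∧ ∀ i ≤ π.length, 0 ≤ proj j (vecAt π u i)

/-- A run of `V`: a path of `V` enabled in the configuration `(q, u)`.
Its source is `(q, u)`, its target is `(endState π q, vecAt π u π.length)`,
and its configurations are `(stateAt π q i, vecAt π u i)` for `i ≤ π.length`. -/
def IsRun {n : ℕ} (V : VASS n) (π : List (Transition n)) (q : Fin n) (u : Vec2) : Prop :=
  IsPath V π ∧ Enabled π q u

/-- A (0,0)-run of `V`: a run whose source and target counter values are `(0,0)`. -/
def IsZeroRun {n : ℕ} (V : VASS n) (π : List (Transition n)) (q : Fin n) : Prop :=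
  IsRun V π q 0 ∧ effect π = 0

/-- A cycle of `V`: a nonempty path of `V` whose starting and ending control
states coincide. -/
def IsCycle {n : ℕ} (V : VASS n) (γ : List (Transition n)) : Prop :=
  IsPath V γ ∧ γ ≠ [] ∧ γ.head?.map (fun t => t.1) = γ.getLast?.map (fun t => t.2.2)

/-! ### Belts and thin runs -/

/-- Embedding of integer vectors into the Euclidean plane. -/
noncomputable def toE (v : Vec2) : EuclideanSpace ℝ (Fin 2) :=
  (WithLp.equiv 2 (Fin 2 → ℝ)).symm ![(v.1 : ℝ), (v.2 : ℝ)]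

/-- The half-line `ℝ≥0 · v` in the Euclidean plane induced by `v`. -/
noncomputable def rayE (v : Vec2) : Set (EuclideanSpace ℝ (Fin 2)) :=
  {x | ∃ a : ℝ, 0 ≤ a ∧ x = a • toE v}

/-- The Euclidean distance from the point `u` to the half-line induced by `v`. -/
noncomputable def distToRay (u v : Vec2) : ℝ := Metric.infDist (toE u) (rayE v)

/-- `u` belongs to the belt of direction `v` and width `W`:
`u` is nonnegative and its Euclidean distance to the half-line `ℓ_v` is at most `W`. -/
def InBelt (u : Vec2) (v : Vec2) (W : ℝ) : Prop :=
  (0 : Vec2) ≤ u ∧ distToRay u v ≤ W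

/-- A run (given by its path `π` and source counter values `u`) is `A`-thin if
each of its configurations lies in some `A`-belt, i.e. a belt whose direction
has norm at most `A` and whose width is at most `A`. -/
def IsThin {n : ℕ} (A : ℕ) (π : List (Transition n)) (u : Vec2) : Prop :=
  ∀ i ≤ π.length, ∃ v : Vec2, (0 : Vec2) ≤ v ∧ vnorm v ≤ A ∧
    ∃ W : ℝ, W ≤ (A : ℝ) ∧ InBelt (vecAt π u i) v W

/-! ### Thick runs -/

/-- The reversal of a transition. -/
def revT {n : ℕ} (t : Transition n) : Transition n := (t.2.2, -t.2.1, t.1)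

/-- The reversal of a 2-VASS. -/
def revV {n : ℕ} (V : VASS n) : VASS n := V.image revT

/-- The reversal of a path: the reversed sequence of reversed transitions. -/
def revPath {n : ℕ} (π : List (Transition n)) : List (Transition n) :=
  (π.reverse).map revT

/-- Four vectors `v₁, v₂, v₃, v₄` are `A`-sequentially enabled in the run given
by the path `π` with source configuration `(q, u)`:  `π` factors into
`ρ₁ρ₂ρ₃ρ₄ρ₅` and there are cycles `π₁, π₂, π₃, π₄` of `V` of length at most `A`
with effects `v₁, v₂, v₃, v₄` such that: `v₁` is semi-positive, `π₁` is
enabled in `trg(ρ₁)` and both coordinates are bounded by `A` along `ρ₁`;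
if `v₁` is positive then `π₂` is ∅-enabled in `trg(ρ₂)`, and otherwise,
for the coordinate `j` with `v₁[j] = 0`, `π₂` is `{j}`-enabled in `trg(ρ₂)` and
the `j`-th coordinate is bounded by `A` along `ρ₂`; and `π₃`, `π₄` are
∅-enabled in `trg(ρ₃)`, `trg(ρ₄)` respectively. -/
def SeqEnabled {n : ℕ} (V : VASS n) (A : ℕ) (π : List (Transition n))
    (q : Fin n) (u : Vec2) (v₁ v₂ v₃ v₄ : Vec2) : Prop :=
  ∃ ρ₁ ρ₂ ρ₃ ρ₄ ρ₅ π₁ π₂ π₃ π₄ : List (Transition n),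
    π = ρ₁ ++ ρ₂ ++ ρ₃ ++ ρ₄ ++ ρ₅ ∧
    IsCycle V π₁ ∧ IsCycle V π₂ ∧ IsCycle V π₃ ∧ IsCycle V π₄ ∧
    π₁.length ≤ A ∧ π₂.length ≤ A ∧ π₃.length ≤ A ∧ π₄.length ≤ A ∧
    effect π₁ = v₁ ∧ effect π₂ = v₂ ∧ effect π₃ = v₃ ∧ effect π₄ = v₄ ∧
    SemiPos v₁ ∧
    Enabled π₁ (stateAt π q ρ₁.length) (vecAt π u ρ₁.length) ∧
    (∀ i ≤ ρ₁.length, (vecAt π u i).1 ≤ (A : ℤ) ∧ (vecAt π u i).2 ≤ (A : ℤ)) ∧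
    (Pos v₁ → startsAt π₂ (stateAt π q (ρ₁.length + ρ₂.length))) ∧
    (¬ Pos v₁ → ∃ j : Fin 2, proj j v₁ = 0 ∧
      JEnabled π₂ (stateAt π q (ρ₁.length + ρ₂.length))
        (vecAt π u (ρ₁.length + ρ₂.length)) j ∧
      (∀ i : ℕ, ρ₁.length ≤ i → i ≤ ρ₁.length + ρ₂.length →
        proj j (vecAt π u i) ≤ (A : ℤ))) ∧
    startsAt π₃ (stateAt π q (ρ₁.length + ρ₂.length + ρ₃.length)) ∧
    startsAt π₄ (stateAt π q (ρ₁.length + ρ₂.length + ρ₃.length + ρ₄.length))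

/-- A set of rational vectors is non-trivial if it contains two non-colinear
nonzero vectors. -/
def NonTrivial (s : Set (ℚ × ℚ)) : Prop :=
  ∃ x ∈ s, ∃ y ∈ s, x ≠ 0 ∧ y ≠ 0 ∧ rayQ x ≠ rayQ y

/-- A (0,0)-run (given by its path `π` and source state `q`) is `A`-thick if it
factors into `τ = ρ ρ'` such that some vectors `v₁,…,v₄` are `A`-sequentially
enabled in `ρ`, some vectors `v'₁,…,v'₄` are `A`-sequentially enabled in the
reversal of `ρ'` (a run of the reversal of `V`, whose source is the target of
`τ`), and the intersection of the corresponding sequential cones is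
non-trivial. -/
def IsThick {n : ℕ} (V : VASS n) (A : ℕ) (π : List (Transition n)) (q : Fin n) : Prop :=
  ∃ ρ ρ' : List (Transition n), π = ρ ++ ρ' ∧
    ∃ v₁ v₂ v₃ v₄ w₁ w₂ w₃ w₄ : Vec2,
      SeqEnabled V A ρ q 0 v₁ v₂ v₃ v₄ ∧
      SeqEnabled (revV V) A (revPath ρ') (endState π q) 0 w₁ w₂ w₃ w₄ ∧
      NonTrivial (SeqCone [v₁, v₂, v₃, v₄] ∩ SeqCone [w₁, w₂, w₃, w₄])

/-!
Suppose that the run passes through a vector `u` that lies in no `A`-belt, and split it at `u`. The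
reversal of the second half is again a run from the origin to `u`, so it is enough to find in a run
from the origin to `u` sequentially enabled cycles whose cone contains `u` in its interior: two such
cones have a non-trivial intersection.

As long as no short semi-positive cycle is enabled, the run can grow at most by a fixed polynomial
factor in each strongly connected component: either the cycles of the component combine to a
positive one, which would be enabled where both counters are large, or a linear form that is
nonpositive on all of them confines the run. Hence a run to a large `u` enables a semi-positive
cycle `m` within an exponential box. As `u` is far from the direction of `m`, the rest of the run
must turn away from it towards `u`, and therefore meets a simple cycle `w` on that side of `m`. If
`w` lies beyond `u`, then `u` is strictly between `m` and `w`. Otherwise `w` is semi-positive and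
closer to `u` than `m`, and the argument is repeated with `w` in place of `m`; as simple cycles have
few effects, this stops.
-/

/-! ### Planar integer vectors -/

lemma abs_fst_le_vnorm (v : Vec2) : |v.1| ≤ vnorm v := by
  simp only [vnorm, Int.abs_eq_natAbs]; omega

lemma abs_snd_le_vnorm (v : Vec2) : |v.2| ≤ vnorm v := by
  simp only [vnorm, Int.abs_eq_natAbs]; omega

lemma vnorm_le_iff {v : Vec2} {A : ℕ} : vnorm v ≤ A ↔ |v.1| ≤ A ∧ |v.2| ≤ A := by
  simp only [vnorm, Int.abs_eq_natAbs]; omega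

lemma vnorm_add_le (v w : Vec2) : vnorm (v + w) ≤ vnorm v + vnorm w := by
  simp only [vnorm, Prod.fst_add, Prod.snd_add]; omega

lemma proj_add (j : Fin 2) (v w : Vec2) : proj j (v + w) = proj j v + proj j w := by
  unfold proj; split <;> rfl

lemma proj_nonneg (j : Fin 2) {v : Vec2} (hv : 0 ≤ v) : 0 ≤ proj j v := by
  unfold proj; split
  exacts [hv.1, hv.2]

lemma abs_proj_le_vnorm (j : Fin 2) (v : Vec2) : |proj j v| ≤ vnorm v := by
  unfold proj; split
  exacts [abs_fst_le_vnorm v, abs_snd_le_vnorm v]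

lemma vnorm_le_of_forall_proj_le {v : Vec2} {A : ℕ} (hv : 0 ≤ v) (h : ∀ j, proj j v ≤ A) :
    vnorm v ≤ A :=
  vnorm_le_iff.2 ⟨(abs_of_nonneg hv.1).trans_le (h 0), (abs_of_nonneg hv.2).trans_le (h 1)⟩

lemma finite_of_forall_vnorm_le {W : Set Vec2} {A : ℕ} (hW : ∀ w ∈ W, vnorm w ≤ A) : W.Finite :=
  (Set.finite_Icc ((-A, -A) : Vec2) (A, A)).subset fun w hw => by
    have := vnorm_le_iff.1 (hW w hw)
    exact ⟨⟨(abs_le.1 this.1).1, (abs_le.1 this.2).1⟩, (abs_le.1 this.1).2, (abs_le.1 this.2).2⟩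

lemma SemiPos.nonneg {v : Vec2} (h : SemiPos v) : 0 ≤ v := ⟨h.1, h.2.1⟩

lemma SemiPos.sum_pos {v : Vec2} (h : SemiPos v) : 0 < v.1 + v.2 := by
  obtain ⟨h₁, h₂, h₃⟩ := h
  omega

lemma SemiPos.vnorm_pos {v : Vec2} (h : SemiPos v) : 0 < vnorm v := by
  have := h.sum_pos
  simp only [vnorm]; omega

lemma Pos.semiPos {v : Vec2} (h : Pos v) : SemiPos v := ⟨h.1.le, h.2.le, Or.inl h.1⟩

lemma semiPos_sub_of_proj {v w : Vec2} {j k : Fin 2} (hjk : j ≠ k) (hj : proj j v = proj j w)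
    (hk : proj k v < proj k w) : SemiPos (w - v) := by
  fin_cases j <;> fin_cases k <;> simp [proj, SemiPos] at hjk hj hk ⊢ <;> omega

lemma pos_add_nsmul {u e : Vec2} {A : ℕ} (hu : vnorm u ≤ A) (he : Pos e) :
    Pos (u + (A + 1) • e) := by
  obtain ⟨h₁, h₂⟩ := vnorm_le_iff.1 hu
  obtain ⟨he₁, he₂⟩ := he
  constructor
  · rw [Prod.fst_add, Prod.smul_fst, nsmul_eq_mul]
    push_cast
    nlinarith [(abs_le.1 h₁).1]
  · rw [Prod.snd_add, Prod.smul_snd, nsmul_eq_mul]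
    push_cast
    nlinarith [(abs_le.1 h₂).1]

/-- The linear form `v ↦ d₁v₁ + d₂v₂` on the plane. -/
def dot (d : Vec2) : Vec2 →+ ℤ where
  toFun v := d.1 * v.1 + d.2 * v.2
  map_zero' := by simp
  map_add' v w := by simp only [Prod.fst_add, Prod.snd_add]; ring

lemma dot_apply (d v : Vec2) : dot d v = d.1 * v.1 + d.2 * v.2 := rfl

lemma dot_le (d v : Vec2) : dot d v ≤ (|d.1| + |d.2|) * vnorm v := by
  have h (a b : ℤ) (hb : |b| ≤ vnorm v) : a * b ≤ |a| * vnorm v :=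
    (le_abs_self _).trans ((abs_mul a b).trans_le (by gcongr))
  rw [dot_apply, add_mul]
  exact add_le_add (h _ _ (abs_fst_le_vnorm v)) (h _ _ (abs_snd_le_vnorm v))

lemma exists_proj_le_dot {d y : Vec2} (hd : SemiPos d) (hy : 0 ≤ y) : ∃ j, proj j y ≤ dot d y := by
  obtain ⟨hd₁, hd₂, h⟩ := hd
  obtain ⟨hy₁, hy₂⟩ := hy
  simp only [Prod.fst_zero, Prod.snd_zero] at hy₁ hy₂
  have e₁ := mul_nonneg hd₁ hy₁
  have e₂ := mul_nonneg hd₂ hy₂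
  rcases h with h | h
  · exact ⟨0, by simp only [proj, if_true, dot_apply]; nlinarith⟩
  · exact ⟨1, by simp only [proj, one_ne_zero, if_false, dot_apply]; nlinarith⟩

/-- The area of the parallelogram spanned by `m` and a second vector, signed according to the
orientation `σ` of the plane; for `σ = 1` it is positive on the vectors to the left of `m`. -/
def area (σ : ℤˣ) (m : Vec2) : Vec2 →+ ℤ := dot (-(σ * m.2), σ * m.1)

lemma area_apply (σ : ℤˣ) (m v : Vec2) : area σ m v = σ * (m.1 * v.2 - m.2 * v.1) := by
  simp only [area, dot_apply]; ring

lemma area_swap (σ : ℤˣ) (m v : Vec2) : area σ m v = -area σ v m := by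
  simp only [area_apply]; ring

lemma abs_area (σ : ℤˣ) (m v : Vec2) : |area σ m v| = |area 1 m v| := by
  rcases Int.units_eq_one_or σ with rfl | rfl <;> simp [area_apply, abs_sub_comm]

lemma exists_area_eq_abs (m v : Vec2) : ∃ σ : ℤˣ, area σ m v = |area 1 m v| := by
  rcases abs_choice (area 1 m v) with h | h
  · exact ⟨1, h.symm⟩
  · exact ⟨-1, by rw [h]; simp [area_apply]⟩

lemma abs_add_abs_area_form (σ : ℤˣ) {m : Vec2} (hm : 0 ≤ m) :
    |-(σ * m.2)| + |σ * m.1| = m.1 + m.2 := by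
  have h₁ : 0 ≤ m.1 := hm.1
  have h₂ : 0 ≤ m.2 := hm.2
  rw [abs_neg, abs_mul, abs_mul, Int.isUnit_iff_abs_eq.1 σ.isUnit, one_mul, one_mul,
    abs_of_nonneg h₁, abs_of_nonneg h₂, add_comm]

lemma area_le (σ : ℤˣ) {m : Vec2} (hm : 0 ≤ m) (v : Vec2) :
    area σ m v ≤ (m.1 + m.2) * vnorm v := by
  rw [← abs_add_abs_area_form σ hm]
  exact dot_le _ v

/-- If `m'` lies on the negative side of `m`, so does the part of the quadrant on the negative
side of `m'`; `c` measures the distance to that part. -/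
lemma area_le_of_turn {σ : ℤˣ} {m m' y : Vec2} {c : ℤ} (hm : SemiPos m) (hm' : SemiPos m')
    (hy : 0 ≤ y) (ht : area σ m m' ≤ 0) (h : area σ m' y ≤ (m'.1 + m'.2) * c) :
    area σ m y ≤ (m.1 + m.2) * c := by
  have hy' : 0 ≤ y.1 + y.2 := add_nonneg hy.1 hy.2
  refine le_of_mul_le_mul_right ?_ hm'.sum_pos
  calc area σ m y * (m'.1 + m'.2)
      = area σ m' y * (m.1 + m.2) + area σ m m' * (y.1 + y.2) := by
        simp only [area_apply]; ring
    _ ≤ (m'.1 + m'.2) * c * (m.1 + m.2) + 0 :=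
        add_le_add (mul_le_mul_of_nonneg_right h hm.sum_pos.le)
          (mul_nonpos_of_nonpos_of_nonneg ht hy')
    _ = (m.1 + m.2) * c * (m'.1 + m'.2) := by ring

lemma semiPos_of_area {σ : ℤˣ} {m u w : Vec2} (hm : 0 ≤ m) (hu : 0 ≤ u)
    (hmu : 0 < area σ m u) (hmw : 0 < area σ m w) (hwu : 0 ≤ area σ w u) : SemiPos w := by
  obtain ⟨hm₁, hm₂⟩ := hm
  obtain ⟨hu₁, hu₂⟩ := hu
  simp only [Prod.fst_zero, Prod.snd_zero] at hm₁ hm₂ hu₁ hu₂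
  have h₁ : area σ m u * w.1 = area σ w u * m.1 + area σ m w * u.1 := by
    simp only [area_apply]; ring
  have h₂ : area σ m u * w.2 = area σ w u * m.2 + area σ m w * u.2 := by
    simp only [area_apply]; ring
  have hw₁ : 0 ≤ w.1 := nonneg_of_mul_nonneg_right (by rw [h₁]; positivity) hmu
  have hw₂ : 0 ≤ w.2 := nonneg_of_mul_nonneg_right (by rw [h₂]; positivity) hmu
  refine ⟨hw₁, hw₂, ?_⟩
  by_contra! h
  simp [area_apply, le_antisymm h.1 hw₁, le_antisymm h.2 hw₂] at hmw

lemma exists_area_nonpos {S : Set Vec2} (hfin : S.Finite) (hne : S.Nonempty)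
    (hS : ∀ w ∈ S, 0 < w.1) : ∃ m ∈ S, ∀ w ∈ S, area 1 m w ≤ 0 := by
  obtain ⟨m, hm, hmax⟩ := Set.exists_max_image S (fun w => (w.2 : ℚ) / w.1) hfin hne
  refine ⟨m, hm, fun w hw => ?_⟩
  have h := hmax w hw
  rw [div_le_div_iff₀ (by exact_mod_cast hS w hw) (by exact_mod_cast hS m hm)] at h
  have h' : w.2 * m.1 ≤ m.2 * w.1 := by exact_mod_cast h
  simp only [area_apply, Units.val_one]
  linarith

lemma pos_combination_of_area_pos {w w' : Vec2} (hw₁ : 0 ≤ w.1) (hw₂ : w.2 ≤ 0)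
    (hw'₁ : w'.1 ≤ 0) (hw'₂ : 0 ≤ w'.2) (h : 0 < area 1 w w') :
    Pos ((w'.2 - w'.1).toNat • w + (w.1 - w.2).toNat • w') := by
  have ha : ((w'.2 - w'.1).toNat : ℤ) = w'.2 - w'.1 := Int.toNat_of_nonneg (by omega)
  have hb : ((w.1 - w.2).toNat : ℤ) = w.1 - w.2 := Int.toNat_of_nonneg (by omega)
  simp only [area_apply, Units.val_one] at h
  constructor
  · rw [Prod.fst_add, Prod.smul_fst, Prod.smul_fst, nsmul_eq_mul, nsmul_eq_mul, ha, hb]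
    linarith
  · rw [Prod.snd_add, Prod.smul_snd, Prod.smul_snd, nsmul_eq_mul, nsmul_eq_mul, ha, hb]
    linarith

/-- An effective Gordan alternative in the plane. -/
lemma exists_pos_combination_or_form {W : Set Vec2} {N : ℕ} (hN : 1 ≤ N)
    (hW : ∀ w ∈ W, vnorm w ≤ N) :
    (∃ w ∈ W, ∃ w' ∈ W, ∃ a ≤ 2 * N, ∃ b ≤ 2 * N, Pos (a • w + b • w')) ∨
      ∃ d, SemiPos d ∧ vnorm d ≤ N ∧ ∀ w ∈ W, dot d w ≤ 0 := by
  by_cases hpos : ∃ w ∈ W, Pos w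
  · obtain ⟨w, hw, h⟩ := hpos
    exact Or.inl ⟨w, hw, w, hw, 1, by omega, 0, by omega, by simpa using h⟩
  replace hpos : ∀ w ∈ W, 0 < w.1 → w.2 ≤ 0 := fun w hw h₁ =>
    not_lt.1 fun h₂ => hpos ⟨w, hw, h₁, h₂⟩
  rcases Set.eq_empty_or_nonempty {w ∈ W | 0 < w.1} with hempty | hne
  · refine Or.inr ⟨(1, 0), by simp [SemiPos], by simpa [vnorm] using hN, fun w hw => ?_⟩
    have : w ∉ {w ∈ W | 0 < w.1} := by simp [hempty]
    simpa [dot_apply, hw] using this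
  obtain ⟨m, ⟨hm, hm₁⟩, hext⟩ :=
    exists_area_nonpos (finite_of_forall_vnorm_le fun w hw => hW w hw.1) hne fun w hw => hw.2
  have hm₂ := hpos m hm hm₁
  have hmN := hW m hm
  by_cases hform : ∀ w ∈ W, area 1 m w ≤ 0
  · refine Or.inr ⟨(-m.2, m.1), ⟨by simpa using hm₂, hm₁.le, Or.inr hm₁⟩, ?_, ?_⟩
    · simpa [vnorm, and_comm] using hmN
    · simpa [area] using hform
  push Not at hform
  obtain ⟨w, hw, hmw⟩ := hform
  have hw₁ : w.1 ≤ 0 := not_lt.1 fun h => (hext w ⟨hw, h⟩).not_gt hmw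
  have hw₂ : 0 ≤ w.2 := by
    simp only [area_apply, Units.val_one] at hmw
    by_contra! h
    nlinarith [mul_nonneg_of_nonpos_of_nonpos hm₂ hw₁]
  have hwN := hW w hw
  rw [vnorm_le_iff, abs_le, abs_le] at hmN hwN
  exact Or.inl ⟨m, hm, w, hw, _, by omega, _, by omega,
    pos_combination_of_area_pos hm₁.le hm₂ hw₁ hw₂ hmw⟩

/-! ### Paths, states and vectors -/

section Paths

variable {n : ℕ}

lemma effect_cons (t : Transition n) (π : List (Transition n)) :
    effect (t :: π) = t.2.1 + effect π := by
  simp [effect]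

lemma effect_append (a b : List (Transition n)) : effect (a ++ b) = effect a + effect b := by
  simp [effect]

lemma stateAt_zero (π : List (Transition n)) (p : Fin n) : stateAt π p 0 = p := by
  simp [stateAt]

lemma stateAt_nil (p : Fin n) (i : ℕ) : stateAt [] p i = p := by
  simp [stateAt]

lemma stateAt_cons_succ (t : Transition n) (π : List (Transition n)) (p : Fin n) (i : ℕ) :
    stateAt (t :: π) p (i + 1) = stateAt π t.2.2 i := by
  simp only [stateAt, List.take_succ_cons, List.getLast?_cons]
  cases h : (List.take i π).getLast? <;> simp

lemma stateAt_append_left {a b : List (Transition n)} {i : ℕ} (h : i ≤ a.length) (p : Fin n) :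
    stateAt (a ++ b) p i = stateAt a p i := by
  simp [stateAt, List.take_append_of_le_length h]

lemma stateAt_append_right (a b : List (Transition n)) (p : Fin n) (i : ℕ) :
    stateAt (a ++ b) p (a.length + i) = stateAt b (endState a p) i := by
  induction a generalizing p with
  | nil => simp [endState, stateAt_nil]
  | cons t a ih =>
    simpa [endState, stateAt_cons_succ, Nat.succ_add] using ih t.2.2

lemma stateAt_take {π : List (Transition n)} {i k : ℕ} (h : i ≤ k) (p : Fin n) :
    stateAt (π.take k) p i = stateAt π p i := by
  simp [stateAt, List.take_take, h]

lemma endState_take (π : List (Transition n)) (p : Fin n) (i : ℕ) :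
    endState (π.take i) p = stateAt π p i := by
  simp only [endState, stateAt, List.take_length]

lemma stateAt_drop (π : List (Transition n)) (p : Fin n) (i k : ℕ) :
    stateAt (π.drop i) (stateAt π p i) k = stateAt π p (i + k) := by
  induction π generalizing p i with
  | nil => simp [stateAt_nil]
  | cons t π ih =>
    cases i with
    | zero => simp [stateAt_zero]
    | succ i => simpa [stateAt_cons_succ, Nat.succ_add] using ih t.2.2 i

lemma vecAt_zero (π : List (Transition n)) (x : Vec2) : vecAt π x 0 = x := by
  simp [vecAt, effect]

lemma vecAt_length (π : List (Transition n)) (x : Vec2) : vecAt π x π.length = x + effect π := by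
  simp [vecAt]

lemma vecAt_append_left {a b : List (Transition n)} {i : ℕ} (h : i ≤ a.length) (x : Vec2) :
    vecAt (a ++ b) x i = vecAt a x i := by
  simp [vecAt, List.take_append_of_le_length h]

lemma vecAt_append_right (a b : List (Transition n)) (x : Vec2) (i : ℕ) :
    vecAt (a ++ b) x (a.length + i) = vecAt b (x + effect a) i := by
  simp [vecAt, List.take_length_add_append, effect_append, add_assoc]

lemma vecAt_take {π : List (Transition n)} {i k : ℕ} (h : i ≤ k) (x : Vec2) :
    vecAt (π.take k) x i = vecAt π x i := by
  simp [vecAt, List.take_take, h]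

lemma vecAt_drop (π : List (Transition n)) (x : Vec2) (i k : ℕ) :
    vecAt (π.drop i) (vecAt π x i) k = vecAt π x (i + k) := by
  simp [vecAt, List.take_add, effect_append, add_assoc]

lemma vecAt_add_effect_drop (π : List (Transition n)) (x : Vec2) (i : ℕ) :
    vecAt π x i + effect (π.drop i) = x + effect π := by
  rw [vecAt, add_assoc, ← effect_append, List.take_append_drop]

/-- All configurations along the path `π` started in the configuration `(p, x)` satisfy `P`. -/
def Along (P : Fin n → Vec2 → Prop) (π : List (Transition n)) (p : Fin n) (x : Vec2) : Prop :=
  ∀ i ≤ π.length, P (stateAt π p i) (vecAt π x i)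

section Along

variable {P Q : Fin n → Vec2 → Prop} {π a b : List (Transition n)} {p : Fin n} {x : Vec2}

lemma along_append :
    Along P (a ++ b) p x ↔ Along P a p x ∧ Along P b (endState a p) (x + effect a) := by
  constructor
  · refine fun h => ⟨fun i hi => ?_, fun i hi => ?_⟩
    · rw [← stateAt_append_left hi, ← vecAt_append_left hi]
      exact h i (hi.trans (by simp))
    · rw [← stateAt_append_right, ← vecAt_append_right]
      exact h _ (by simpa using hi)
  · rintro ⟨ha, hb⟩ i hi
    rcases le_total i a.length with h | h
    · rw [stateAt_append_left h, vecAt_append_left h]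
      exact ha i h
    · obtain ⟨k, rfl⟩ := Nat.exists_eq_add_of_le h
      rw [stateAt_append_right, vecAt_append_right]
      exact hb k (by simpa using hi)

lemma Along.mono (h : Along P π p x) (hPQ : ∀ r y, P r y → Q r y) : Along Q π p x :=
  fun i hi => hPQ _ _ (h i hi)

lemma Along.source (h : Along P π p x) : P p x := by
  simpa [stateAt_zero, vecAt_zero] using h 0 (Nat.zero_le _)

lemma Along.target (h : Along P π p x) : P (endState π p) (x + effect π) := by
  rw [← vecAt_length]
  exact h _ le_rfl

lemma Along.take (h : Along P π p x) (i : ℕ) : Along P (π.take i) p x := by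
  rw [← List.take_append_drop i π, along_append] at h
  exact h.1

lemma Along.drop (h : Along P π p x) (i : ℕ) :
    Along P (π.drop i) (stateAt π p i) (vecAt π x i) := by
  rw [← List.take_append_drop i π, along_append, endState_take] at h
  exact h.2

end Along

end Paths

lemma exists_length_le {α : Type*} {P : List α → Prop} {L : ℕ} {l : List α} (hl : P l)
    (hshorten : ∀ l, P l → L < l.length → ∃ l', l'.length < l.length ∧ P l') :
    ∃ l', P l' ∧ l'.length ≤ L := by
  induction h : l.length using Nat.strong_induction_on generalizing l with
  | _ k ih =>
  subst h
  rcases le_or_gt l.length L with hle | hlt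
  · exact ⟨l, hl, hle⟩
  · obtain ⟨l', hlen, hl'⟩ := hshorten l hl hlt
    exact ih _ hlen hl' rfl

/-! ### Walks and cycles -/

namespace VASS

variable {n : ℕ} {V : VASS n} {p q r : Fin n} {π a b : List (Transition n)}

/-- `V.Walk p π q`: the list `π` is a path of `V` from the control state `p` to `q`. Unlike
`IsPath`, it determines the endpoints of the empty path. -/
def Walk (V : VASS n) : Fin n → List (Transition n) → Fin n → Prop
  | p, [], q => p = q
  | p, t :: π, q => t ∈ V ∧ t.1 = p ∧ Walk V t.2.2 π q

lemma walk_append : V.Walk p (a ++ b) r ↔ ∃ q, V.Walk p a q ∧ V.Walk q b r := by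
  induction a generalizing p with
  | nil => simp [Walk]
  | cons t a ih => simp [Walk, ih, and_assoc]

namespace Walk

lemma append (ha : V.Walk p a q) (hb : V.Walk q b r) : V.Walk p (a ++ b) r :=
  walk_append.2 ⟨q, ha, hb⟩

lemma endState_eq (h : V.Walk p π q) : endState π p = q := by
  induction π generalizing p with
  | nil => exact h
  | cons t π ih => simpa [endState, stateAt_cons_succ] using ih h.2.2

lemma mem (h : V.Walk p π q) : ∀ t ∈ π, t ∈ V := by
  induction π generalizing p with
  | nil => simp
  | cons t π ih => exact List.forall_mem_cons.2 ⟨h.1, ih h.2.2⟩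

lemma startsAt (h : V.Walk p π q) : startsAt π p := by
  cases π with
  | nil => simp [_root_.startsAt]
  | cons t π => simpa [_root_.startsAt] using h.2.1

lemma isPath (h : V.Walk p π q) : IsPath V π := by
  refine ⟨h.mem, ?_⟩
  induction π generalizing p with
  | nil => exact List.isChain_nil
  | cons t π ih =>
    exact List.isChain_cons.2 ⟨fun s hs => (h.2.2.startsAt s hs).symm, ih h.2.2⟩

lemma isCycle (h : V.Walk p π p) (hne : π ≠ []) : IsCycle V π := by
  refine ⟨h.isPath, hne, ?_⟩
  obtain ⟨t, π, rfl⟩ := List.exists_cons_of_ne_nil hne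
  have hend := h.endState_eq
  simp only [endState, stateAt, List.take_length] at hend
  rw [List.getLast?_cons] at hend ⊢
  simpa [h.2.1] using hend.symm

end Walk

lemma walk_of_isPath (h : IsPath V π) (hp : startsAt π p) : V.Walk p π (endState π p) := by
  induction π generalizing p with
  | nil => simp [Walk, endState, stateAt_nil]
  | cons t π ih =>
    obtain ⟨hV, hchain⟩ := h
    obtain ⟨hhead, htail⟩ := List.isChain_cons.1 hchain
    have := ih ⟨fun s hs => hV s (by simp [hs]), htail⟩ fun s hs => (hhead s hs).symm
    exact ⟨hV t (by simp), hp t (by simp), by simpa [endState, stateAt_cons_succ] using this⟩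

namespace Walk

lemma take_drop (h : V.Walk p π q) (i : ℕ) :
    V.Walk p (π.take i) (stateAt π p i) ∧ V.Walk (stateAt π p i) (π.drop i) q := by
  rw [← List.take_append_drop i π] at h
  obtain ⟨r, htake, hdrop⟩ := walk_append.1 h
  obtain rfl : stateAt π p i = r := by rw [← htake.endState_eq, endState_take]
  exact ⟨htake, hdrop⟩

lemma take (h : V.Walk p π q) (i : ℕ) : V.Walk p (π.take i) (stateAt π p i) := (h.take_drop i).1

lemma drop (h : V.Walk p π q) (i : ℕ) : V.Walk (stateAt π p i) (π.drop i) q := (h.take_drop i).2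

lemma exists_stateAt_eq_source (h : V.Walk p π q) {t : Transition n} (ht : t ∈ π) :
    ∃ k < π.length, t.1 = stateAt π p k := by
  obtain ⟨k, hk, rfl⟩ := List.getElem_of_mem ht
  exact ⟨k, hk, (h.drop k).startsAt _ (by simp [hk])⟩

/-- Pigeonhole on the pairs (control state, value of `φ`). -/
lemma exists_cycle_of_forall_mem {G : Type*} [AddGroup G] (h : V.Walk p π q) (x : Vec2)
    (φ : Vec2 →+ G) (K : Finset G) (hK : ∀ i ≤ π.length, φ (vecAt π x i) ∈ K)
    (hlen : n * K.card ≤ π.length) :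
    ∃ a γ b r, π = a ++ (γ ++ b) ∧ V.Walk p a r ∧ V.Walk r γ r ∧ V.Walk r b q ∧ γ ≠ [] ∧
      γ.length ≤ n * K.card ∧ φ (effect γ) = 0 := by
  classical
  obtain ⟨i, hi, j, hj, hne, heq⟩ := Finset.exists_ne_map_eq_of_card_lt_of_maps_to
    (s := Finset.range (n * K.card + 1)) (t := (Finset.univ : Finset (Fin n)) ×ˢ K)
    (f := fun i => (stateAt π p i, φ (vecAt π x i))) (by simp)
    (fun i hi => by
      have : i < n * K.card + 1 := by simpa using hi
      simpa using hK i (by omega))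
  wlog hlt : i < j generalizing i j
  · exact this j hj i hi hne.symm heq.symm (lt_of_le_of_ne (not_lt.1 hlt) hne.symm)
  obtain ⟨k, rfl⟩ := Nat.exists_eq_add_of_le hlt.le
  simp only [Finset.mem_range, Prod.mk.injEq, ← stateAt_drop π p i k, ← vecAt_drop π x i k]
    at hi hj heq
  have hγ := (h.drop i).take k
  rw [← heq.1] at hγ
  refine ⟨π.take i, (π.drop i).take k, (π.drop i).drop k, stateAt π p i, by simp, h.take i, hγ,
    ?_, ?_, by simp; omega, ?_⟩
  · have := (h.drop i).drop k
    rwa [← heq.1] at this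
  · exact fun hnil => by
      have := congrArg List.length hnil
      simp at this
      omega
  · simpa [vecAt] using heq.2

end Walk

/-- Some nonempty cycle of length at most `L` through the control state `r` has effect `w`. -/
def HasCycle (V : VASS n) (L : ℕ) (r : Fin n) (w : Vec2) : Prop :=
  ∃ γ, γ ≠ [] ∧ γ.length ≤ L ∧ V.Walk r γ r ∧ effect γ = w

lemma HasCycle.mono {L L' : ℕ} {w : Vec2} (h : V.HasCycle L r w) (hL : L ≤ L') :
    V.HasCycle L' r w := by
  obtain ⟨γ, hne, hlen, hγ, hw⟩ := h
  exact ⟨γ, hne, hlen.trans hL, hγ, hw⟩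

namespace Walk

lemma exists_short (h : V.Walk p π q) (f : Vec2 →+ ℤ)
    (hf : ∀ t ∈ π, ∀ w, V.HasCycle n t.1 w → f w ≤ 0) :
    ∃ π', V.Walk p π' q ∧ π'.length ≤ n ∧ f (effect π) ≤ f (effect π') := by
  obtain ⟨π', ⟨hwalk, -, hle⟩, hlen⟩ := exists_length_le (L := n)
    (P := fun π' => V.Walk p π' q ∧ π' ⊆ π ∧ f (effect π) ≤ f (effect π'))
    ⟨h, List.Subset.refl π, le_rfl⟩ (by
      rintro π₁ ⟨hwalk, hsub, hle⟩ hlong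
      obtain ⟨a, γ, b, r, rfl, ha, hγ, hb, hne, hlen, -⟩ :=
        hwalk.exists_cycle_of_forall_mem 0 (0 : Vec2 →+ ℤ) {0} (by simp) (by simpa using hlong.le)
      have hγlen := List.length_pos_iff.2 hne
      refine ⟨a ++ b, by simp; omega, ha.append hb, fun t ht => hsub ?_, hle.trans ?_⟩
      · simp only [List.mem_append] at ht ⊢; tauto
      · obtain ⟨t, γ, rfl⟩ := List.exists_cons_of_ne_nil hne
        have := hf t (hsub (by simp)) _ ⟨t :: γ, hne, by simpa using hlen, hγ.2.1 ▸ hγ, rfl⟩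
        simp only [effect_append, map_add]
        linarith)
  exact ⟨π', hwalk, hlen, hle⟩

lemma exists_short_run (h : V.Walk p π q) {x : Vec2} {H : ℕ}
    (hbox : Along (fun _ y => 0 ≤ y ∧ vnorm y ≤ H) π p x) :
    ∃ π', V.Walk p π' q ∧ π'.length ≤ n * (H + 1) ^ 2 ∧ effect π' = effect π ∧
      Along (fun _ y => 0 ≤ y) π' p x := by
  have hcard : (Finset.Icc (0 : Vec2) (H, H)).card = (H + 1) ^ 2 := by
    simp [Finset.card_Icc_prod, sq]
  obtain ⟨π', ⟨hwalk, heff, hbox'⟩, hlen⟩ := exists_length_le (L := n * (H + 1) ^ 2)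
    (P := fun π' => V.Walk p π' q ∧ effect π' = effect π ∧
      Along (fun _ y => 0 ≤ y ∧ vnorm y ≤ H) π' p x) ⟨h, rfl, hbox⟩ (by
      rintro π₁ ⟨hwalk, heff, hbox⟩ hlong
      obtain ⟨a, γ, b, r, rfl, ha, hγ, hb, hne, -, hzero⟩ :=
        hwalk.exists_cycle_of_forall_mem x (AddMonoidHom.id Vec2) (Finset.Icc 0 (H, H))
          (fun i hi => Finset.mem_Icc.2 ⟨(hbox i hi).1,
            (le_abs_self _).trans (vnorm_le_iff.1 (hbox i hi).2).1,
            (le_abs_self _).trans (vnorm_le_iff.1 (hbox i hi).2).2⟩) (by rw [hcard]; omega)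
      have hγlen := List.length_pos_iff.2 hne
      rw [AddMonoidHom.id_apply] at hzero
      refine ⟨a ++ b, by simp; omega, ha.append hb, ?_, ?_⟩
      · rw [← heff, effect_append, effect_append, effect_append, hzero, zero_add]
      · rw [along_append, along_append, ha.endState_eq, hγ.endState_eq, hzero,
          add_zero] at hbox
        rw [along_append, ha.endState_eq]
        exact ⟨hbox.1, hbox.2.2⟩)
  exact ⟨π', hwalk, hlen, heff, hbox'.mono fun _ _ hy => hy.1⟩

end Walk

/-! ### Norm bounds -/

/-- The number of control states times the norm: a bound on the effect of a simple path. -/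
def size (V : VASS n) : ℕ := n * vassNorm V

lemma vassNorm_le_size (V : VASS n) : vassNorm V ≤ V.size := by
  rcases Nat.eq_zero_or_pos n with rfl | hn
  · simp [vassNorm, Finset.eq_empty_of_isEmpty V]
  · exact Nat.le_mul_of_pos_left _ hn

namespace Walk

lemma vnorm_effect_le (h : V.Walk p π q) : vnorm (effect π) ≤ π.length * vassNorm V := by
  induction π generalizing p with
  | nil => simp [effect, vnorm]
  | cons t π ih =>
    have ht : vnorm t.2.1 ≤ vassNorm V := Finset.le_sup (f := fun t => vnorm t.2.1) h.1
    rw [effect_cons, List.length_cons, Nat.add_one_mul, add_comm (_ * _)]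
    exact (vnorm_add_le _ _).trans (add_le_add ht (ih h.2.2))

lemma vnorm_effect_le_size (h : V.Walk p π q) (hlen : π.length ≤ n) :
    vnorm (effect π) ≤ V.size :=
  h.vnorm_effect_le.trans (Nat.mul_le_mul_right _ hlen)

lemma exists_vecAt_succ (h : V.Walk p π q) (x : Vec2) {i : ℕ} (hi : i < π.length) :
    ∃ v, vnorm v ≤ vassNorm V ∧ vecAt π x (i + 1) = vecAt π x i + v := by
  refine ⟨effect ((π.drop i).take 1), ?_, (vecAt_drop π x i 1).symm⟩
  simpa [Nat.min_eq_left (show 1 ≤ π.length - i by omega)] using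
    ((h.drop i).take 1).vnorm_effect_le

lemma proj_vecAt_succ_le (h : V.Walk p π q) (x : Vec2) {i : ℕ} (hi : i < π.length)
    (j : Fin 2) : proj j (vecAt π x (i + 1)) ≤ proj j (vecAt π x i) + vassNorm V := by
  obtain ⟨v, hv, heq⟩ := h.exists_vecAt_succ x hi
  have := (abs_le.1 (abs_proj_le_vnorm j v)).2
  rw [heq, proj_add]
  omega

lemma vnorm_vecAt_succ_le (h : V.Walk p π q) (x : Vec2) {i : ℕ} (hi : i < π.length) :
    vnorm (vecAt π x (i + 1)) ≤ vnorm (vecAt π x i) + vassNorm V := by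
  obtain ⟨v, hv, heq⟩ := h.exists_vecAt_succ x hi
  rw [heq]
  exact (vnorm_add_le _ _).trans (by omega)

lemma dot_effect_le (h : V.Walk p π q) (d : Vec2)
    (hd : ∀ k < π.length, ∀ w, V.HasCycle n (stateAt π p k) w → dot d w ≤ 0) :
    dot d (effect π) ≤ (|d.1| + |d.2|) * V.size := by
  obtain ⟨π', hwalk, hlen, hle⟩ := h.exists_short (dot d) fun t ht w hw => by
    obtain ⟨k, hk, hkt⟩ := h.exists_stateAt_eq_source ht
    exact hd k hk w (hkt ▸ hw)
  have := hwalk.vnorm_effect_le_size hlen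
  calc dot d (effect π) ≤ dot d (effect π') := hle
    _ ≤ (|d.1| + |d.2|) * vnorm (effect π') := dot_le d _
    _ ≤ (|d.1| + |d.2|) * V.size := by gcongr

end Walk

lemma HasCycle.vnorm_le {w : Vec2} (h : V.HasCycle n r w) : vnorm w ≤ V.size := by
  obtain ⟨γ, -, hlen, hγ, rfl⟩ := h
  exact hγ.vnorm_effect_le_size hlen

end VASS

/-! ### Sequences with bounded increments -/

lemma exists_last {P : ℕ → Prop} (h : P 0) (t : ℕ) :
    ∃ s ≤ t, P s ∧ ∀ i, s < i → i ≤ t → ¬P i := by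
  classical
  exact ⟨Nat.findGreatest P t, Nat.findGreatest_le t, Nat.findGreatest_spec (Nat.zero_le t) h,
    fun _ => Nat.findGreatest_is_greatest⟩

/-- By induction on `t`, jumping back from `t` to the first index with the same key. -/
lemma le_add_mul_card_image {κ : Type*} [DecidableEq κ] (key : ℕ → κ) (y : ℕ → ℤ) (M : ℕ) {t : ℕ}
    (hstep : ∀ i < t, y (i + 1) ≤ y i + M)
    (hkey : ∀ i j, i < j → j ≤ t → key i = key j → y j ≤ y i) :
    y t ≤ y 0 + M * ((Finset.range (t + 1)).image key).card := by
  induction t using Nat.strong_induction_on with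
  | _ t ih =>
  have hex : ∃ s, key s = key t := ⟨t, rfl⟩
  obtain ⟨s, hs, hfirst⟩ : ∃ s, key s = key t ∧ ∀ i < s, key i ≠ key t :=
    ⟨Nat.find hex, Nat.find_spec hex, fun _ => Nat.find_min hex⟩
  have hst : s ≤ t := not_lt.1 fun h => hfirst t h rfl
  have hyst : y t ≤ y s := by
    rcases hst.eq_or_lt with rfl | h
    · exact le_rfl
    · exact hkey s t h le_rfl hs
  cases s with
  | zero => exact hyst.trans (le_add_of_nonneg_right (by positivity))
  | succ s =>
    have hnew : key (s + 1) ∉ (Finset.range (s + 1)).image key := by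
      simp only [Finset.mem_image, Finset.mem_range, not_exists, not_and]
      exact fun i hi h => hfirst i hi (h.trans hs)
    have hsub : insert (key (s + 1)) ((Finset.range (s + 1)).image key) ⊆
        (Finset.range (t + 1)).image key := by
      rw [← Finset.image_insert, ← Finset.range_add_one]
      exact Finset.image_subset_image (Finset.range_mono (by omega))
    have hcard := Finset.card_le_card hsub
    rw [Finset.card_insert_of_notMem hnew] at hcard
    calc y t ≤ y (s + 1) := hyst
      _ ≤ y s + M := hstep s (by omega)
      _ ≤ y 0 + M * ((Finset.range (s + 1)).image key).card + M := by
        gcongr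
        exact ih s (by omega) (fun i hi => hstep i (by omega))
          fun i j hij hj => hkey i j hij (by omega)
      _ = y 0 + M * (((Finset.range (s + 1)).image key).card + 1 : ℕ) := by push_cast; ring
      _ ≤ y 0 + M * ((Finset.range (t + 1)).image key).card := by gcongr

namespace VASS

variable {n : ℕ} {V : VASS n} {p q r : Fin n} {π : List (Transition n)} {x y : Vec2} {H : ℕ}

/-! ### Runs that enable no semi-positive cycle -/

/-- Some semi-positive cycle of length at most `L` is enabled in the configuration `(r, y)`. -/
def EnablesSemiPosCycle (V : VASS n) (L : ℕ) (r : Fin n) (y : Vec2) : Prop :=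
  ∃ γ, V.Walk r γ r ∧ γ.length ≤ L ∧ SemiPos (effect γ) ∧ Along (fun _ z => 0 ≤ z) γ r y

/-- The length allowed for semi-positive cycles when the run is confined to a box of side `H`.
It covers both a run without repeated configurations in the box, of length at most `n(H + 1)²`,
and the positive cycles of `exists_pos_cycle`, of length at most `19nN²` with `N = V.size`. -/
def cycleBound (V : VASS n) (H : ℕ) : ℕ := 19 * n * V.size ^ 2 * (H + 1) ^ 2

/-- A configuration in the box of side `H` that enables no semi-positive cycle of length at most
`V.cycleBound H`. -/
def Inert (V : VASS n) (H : ℕ) (r : Fin n) (y : Vec2) : Prop :=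
  0 ≤ y ∧ vnorm y ≤ H ∧ ¬V.EnablesSemiPosCycle (V.cycleBound H) r y

lemma Walk.size_pos (h : V.Walk p π q) (hne : effect π ≠ 0) : 0 < V.size := by
  refine Nat.mul_pos p.pos (Nat.pos_of_ne_zero fun hM => hne ?_)
  have := vnorm_le_iff.1 (h.vnorm_effect_le.trans_eq (by rw [hM, mul_zero]))
  simpa [Prod.ext_iff] using this

lemma Walk.not_semiPos_of_inert {γ : List (Transition n)} (h : V.Walk p γ p)
    (hin : Along (V.Inert H) γ p x) : ¬SemiPos (effect γ) := by
  intro hpos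
  have hsize : 0 < V.size := h.size_pos fun h0 => by simp [h0, SemiPos] at hpos
  obtain ⟨γ', hγ', hlen, heff, hnn⟩ :=
    h.exists_short_run (hin.mono fun _ _ hy => ⟨hy.1, hy.2.1⟩)
  refine hin.source.2.2 ⟨γ', hγ', hlen.trans ?_, heff ▸ hpos, hnn⟩
  have : 1 ≤ 19 * V.size ^ 2 := by have := Nat.pow_pos (n := 2) hsize; omega
  calc n * (H + 1) ^ 2 ≤ 19 * V.size ^ 2 * (n * (H + 1) ^ 2) := Nat.le_mul_of_pos_left _ this
    _ = V.cycleBound H := by rw [cycleBound]; ring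

/-- A return to the same state and the same value of the restricted coordinate `j` cannot
increase the coordinate `k`, so `k` grows at most once per pair (state, value of `j`). -/
lemma Walk.proj_le_of_strip (h : V.Walk p π q) (hin : Along (V.Inert H) π p x) {j k : Fin 2}
    (hjk : j ≠ k) {D : ℕ} (hD : Along (fun _ y => proj j y ≤ D) π p x) :
    proj k (x + effect π) ≤ proj k x + V.size * (D + 1) := by
  have hle := le_add_mul_card_image (t := π.length)
    (fun i => (stateAt π p i, proj j (vecAt π x i))) (fun i => proj k (vecAt π x i))
    (vassNorm V) (fun i hi => h.proj_vecAt_succ_le x hi k) (by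
      intro i i' hlt hi' heq
      rw [Prod.mk.injEq] at heq
      by_contra! hk
      obtain ⟨d, rfl⟩ := Nat.exists_eq_add_of_le hlt.le
      have hcyc := (h.drop i).take d
      rw [stateAt_drop, ← heq.1] at hcyc
      refine hcyc.not_semiPos_of_inert ((hin.drop i).take d) ?_
      rw [← add_sub_cancel_left (vecAt π x i) (effect _)]
      exact semiPos_sub_of_proj hjk (heq.2.trans (by rw [← vecAt_drop, vecAt]))
        (hk.trans_eq (by rw [← vecAt_drop, vecAt])))
  have hcard : ((Finset.range (π.length + 1)).image
      fun i => (stateAt π p i, proj j (vecAt π x i))).card ≤ n * (D + 1) := by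
    refine (Finset.card_le_card (t := Finset.univ ×ˢ Finset.Icc 0 (D : ℤ)) ?_).trans (by simp)
    intro z hz
    obtain ⟨i, hi, rfl⟩ := Finset.mem_image.1 hz
    have hi' : i ≤ π.length := by simpa [Nat.lt_succ_iff] using hi
    simpa using ⟨proj_nonneg j (hin i hi').1, hD i hi'⟩
  rw [vecAt_length, vecAt_zero] at hle
  calc proj k (x + effect π) ≤ proj k x + vassNorm V * (n * (D + 1) : ℕ) :=
        hle.trans (by gcongr)
    _ = proj k x + V.size * (D + 1) := by rw [size]; push_cast; ring

/-- Far from the origin, the coordinate that is below `D` cannot change. -/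
lemma Walk.exists_along_proj_lt (h : V.Walk p π q) (hnn : Along (fun _ y => 0 ≤ y) π p x) {D : ℕ}
    (hD : Along (fun _ y => ∃ j, proj j y < D) π p x)
    (hfar : Along (fun _ y => D + vassNorm V < vnorm y) π p x) :
    ∃ j, Along (fun _ y => proj j y < D) π p x := by
  obtain ⟨j, hj⟩ := hD.source
  refine ⟨j, fun i => ?_⟩
  induction i with
  | zero => intro _; rwa [vecAt_zero]
  | succ i ih =>
    intro hi
    have hstep := h.proj_vecAt_succ_le x (Nat.lt_of_succ_le hi) j
    have hbefore := ih (by omega)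
    obtain ⟨k, hk⟩ := hD (i + 1) hi
    by_contra! hj'
    have hkj : k ≠ j := by rintro rfl; omega
    refine (hfar (i + 1) hi).not_ge (vnorm_le_of_forall_proj_le (hnn (i + 1) hi) fun l => ?_)
    obtain rfl | rfl : l = k ∨ l = j := by omega
    all_goals push_cast; omega

/-- After the last visit to the box of side `vnorm x + D + vassNorm V`, the run stays in a
strip. -/
lemma Walk.vnorm_le_of_hook (h : V.Walk p π q) (hin : Along (V.Inert H) π p x) {D : ℕ}
    (hD : Along (fun _ y => ∃ j, proj j y < D) π p x) :
    vnorm (x + effect π) ≤ vnorm x + D + 2 * vassNorm V + V.size * (D + 1) := by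
  obtain ⟨s, hs, hbox, hlast⟩ := exists_last
    (P := fun i => vnorm (vecAt π x i) ≤ vnorm x + D + vassNorm V)
    (by rw [vecAt_zero]; omega) π.length
  rcases hs.eq_or_lt with rfl | hs
  · rw [vecAt_length] at hbox
    omega
  have hin' := hin.drop (s + 1)
  have hwalk := h.drop (s + 1)
  obtain ⟨j, hj⟩ := hwalk.exists_along_proj_lt (hin'.mono fun _ _ hy => hy.1)
    (hD.drop (s + 1)) (fun i hi => by
      rw [List.length_drop] at hi
      have := hlast (s + 1 + i) (by omega) (by omega)
      rw [vecAt_drop]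
      omega)
  have hend := hj.target
  rw [← vecAt_add_effect_drop π x (s + 1)]
  refine vnorm_le_of_forall_proj_le hin'.target.1 fun k => ?_
  by_cases hjk : j = k
  · subst hjk
    push_cast
    have : (0 : ℤ) ≤ V.size * (D + 1) := by positivity
    omega
  · have hstrip := hwalk.proj_le_of_strip hin' hjk (hj.mono fun _ _ => le_of_lt)
    have hproj := (abs_le.1 (abs_proj_le_vnorm k (vecAt π x (s + 1)))).2
    have hstep := h.vnorm_vecAt_succ_le x hs
    push_cast
    omega

/-! ### Strongly connected components -/

/-- The control state `r` is reachable from `p` in the underlying graph of `V`. -/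
def Reach (V : VASS n) (p r : Fin n) : Prop := ∃ π, V.Walk p π r

lemma Walk.reach (h : V.Walk p π q) : V.Reach p q := ⟨π, h⟩

lemma Reach.refl (p : Fin n) : V.Reach p p := ⟨[], rfl⟩

lemma Reach.trans (h : V.Reach p q) (h' : V.Reach q r) : V.Reach p r := by
  obtain ⟨a, ha⟩ := h
  obtain ⟨b, hb⟩ := h'
  exact ⟨a ++ b, ha.append hb⟩

lemma Reach.exists_short (h : V.Reach p r) : ∃ π, V.Walk p π r ∧ π.length ≤ n := by
  obtain ⟨π, hπ⟩ := h
  obtain ⟨π', hwalk, hlen, -⟩ := hπ.exists_short 0 (by simp)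
  exact ⟨π', hwalk, hlen⟩

lemma Walk.exists_iterate {γ : List (Transition n)} (h : V.Walk p γ p) (k : ℕ) :
    ∃ γ', V.Walk p γ' p ∧ γ'.length = k * γ.length ∧ effect γ' = k • effect γ := by
  induction k with
  | zero => exact ⟨[], rfl, by simp, by simp [effect]⟩
  | succ k ih =>
    obtain ⟨γ', hγ', hlen, heff⟩ := ih
    exact ⟨γ' ++ γ, hγ'.append h, by rw [List.length_append, hlen, Nat.succ_mul],
      by rw [effect_append, heff, succ_nsmul]⟩

/-- Repeating both cycles `3N + 1` times outweighs the three simple paths, each of effect at most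
`N = V.size`, that connect them. -/
lemma exists_pos_cycle {p₁ p₂ : Fin n} (h₁ : V.Reach p p₁) (h₂ : V.Reach p₁ p₂)
    (h₃ : V.Reach p₂ p) {w w' : Vec2} (hw : V.HasCycle n p₁ w) (hw' : V.HasCycle n p₂ w')
    {a b : ℕ} (ha : a ≤ 2 * V.size) (hb : b ≤ 2 * V.size) (hpos : Pos (a • w + b • w')) :
    ∃ γ, V.Walk p γ p ∧ γ.length ≤ 19 * n * V.size ^ 2 ∧ Pos (effect γ) := by
  obtain ⟨c₁, hc₁, hl₁⟩ := h₁.exists_short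
  obtain ⟨c₂, hc₂, hl₂⟩ := h₂.exists_short
  obtain ⟨c₃, hc₃, hl₃⟩ := h₃.exists_short
  obtain ⟨γ, -, hl, hγ, rfl⟩ := hw
  obtain ⟨γ', -, hl', hγ', rfl⟩ := hw'
  obtain ⟨δ, hδ, hδlen, hδeff⟩ := hγ.exists_iterate ((3 * V.size + 1) * a)
  obtain ⟨δ', hδ', hδlen', hδeff'⟩ := hγ'.exists_iterate ((3 * V.size + 1) * b)
  refine ⟨c₁ ++ (δ ++ (c₂ ++ (δ' ++ c₃))),
    hc₁.append (hδ.append (hc₂.append (hδ'.append hc₃))), ?_, ?_⟩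
  · have hsize : 1 ≤ V.size := by
      by_contra h0
      obtain ⟨rfl, rfl⟩ : a = 0 ∧ b = 0 := by omega
      simp [Pos] at hpos
    have e : (3 * V.size + 1) * a * γ.length ≤ (3 * V.size + 1) * (2 * V.size) * n := by gcongr
    have e' : (3 * V.size + 1) * b * γ'.length ≤ (3 * V.size + 1) * (2 * V.size) * n := by gcongr
    simp only [List.length_append, hδlen, hδlen']
    calc _ ≤ n + ((3 * V.size + 1) * (2 * V.size) * n +
            (n + ((3 * V.size + 1) * (2 * V.size) * n + n))) := by omega
      _ = n * (3 * 1 + 4 * V.size + 12 * V.size ^ 2) := by ring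
      _ ≤ n * (3 * V.size ^ 2 + 4 * V.size ^ 2 + 12 * V.size ^ 2) := by
        gcongr
        · exact Nat.one_le_pow _ _ hsize
        · exact Nat.le_self_pow two_ne_zero _
      _ = 19 * n * V.size ^ 2 := by ring
  · have hconn : vnorm (effect c₁ + effect c₂ + effect c₃) ≤ 3 * V.size :=
      (vnorm_add_le _ _).trans <| (Nat.add_le_add_right (vnorm_add_le _ _) _).trans <| by
        linarith [hc₁.vnorm_effect_le_size hl₁, hc₂.vnorm_effect_le_size hl₂,
          hc₃.vnorm_effect_le_size hl₃]
    have heff : effect (c₁ ++ (δ ++ (c₂ ++ (δ' ++ c₃)))) = effect c₁ + effect c₂ + effect c₃ +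
        (3 * V.size + 1) • (a • effect γ + b • effect γ') := by
      simp only [effect_append, hδeff, hδeff', smul_add, mul_smul]
      abel
    rw [heff]
    exact pos_add_nsmul hconn hpos

lemma exists_proj_lt_of_pos_cycle {γ : List (Transition n)} {L : ℕ} (h : V.Walk r γ r)
    (hlen : γ.length ≤ L) (hpos : Pos (effect γ)) (hno : ¬V.EnablesSemiPosCycle L r y) :
    ∃ j, proj j y < L * vassNorm V := by
  by_contra! hlarge
  refine hno ⟨γ, h, hlen, hpos.semiPos, fun i hi => ?_⟩
  have hprefix : vnorm (effect (γ.take i)) ≤ L * vassNorm V :=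
    (h.take i).vnorm_effect_le.trans
      (Nat.mul_le_mul_right _ ((List.length_take_le _ _).trans (hi.trans hlen)))
  have hcoord (j : Fin 2) : 0 ≤ proj j (vecAt γ y i) := by
    have hj := (abs_le.1 (abs_proj_le_vnorm j (effect (γ.take i)))).1
    have := hlarge j
    rw [vecAt, proj_add]
    push_cast [← Nat.cast_le (α := ℤ)] at hprefix
    omega
  exact ⟨hcoord 0, hcoord 1⟩

lemma Walk.along_exists_proj_le_of_form (h : V.Walk p π q) (hnn : Along (fun _ y => 0 ≤ y) π p x)
    {d : Vec2} (hd : SemiPos d) {D : ℕ} (hdD : vnorm d ≤ D)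
    (hform : ∀ k ≤ π.length, ∀ w, V.HasCycle n (stateAt π p k) w → dot d w ≤ 0) :
    Along (fun _ y => ∃ j, proj j y ≤ 2 * D * (vnorm x + V.size)) π p x := by
  intro i hi
  obtain ⟨j, hj⟩ := exists_proj_le_dot hd (hnn i hi)
  refine ⟨j, hj.trans ?_⟩
  have heff := (h.take i).dot_effect_le d fun k hk w hw => by
    have hki : k < i := by rw [List.length_take] at hk; omega
    exact hform k (by omega) w (stateAt_take hki.le p ▸ hw)
  obtain ⟨hd₁, hd₂⟩ := vnorm_le_iff.1 hdD
  calc dot d (vecAt π x i) ≤ (|d.1| + |d.2|) * (vnorm x + V.size) := by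
        rw [vecAt, map_add, mul_add]
        exact add_le_add (dot_le d x) heff
    _ ≤ (D + D) * (vnorm x + V.size) := by gcongr
    _ = 2 * D * (vnorm x + V.size) := by ring

/-- Either the short cycles of the component combine to a positive cycle, which would be enabled
at a configuration with two large coordinates, or a linear form bounds one of the coordinates. -/
lemma Walk.along_exists_proj_lt (hsize : 0 < V.size) (h : V.Walk p π q) (hback : V.Reach q p)
    (hin : Along (V.Inert H) π p x) :
    Along (fun _ y => ∃ j, proj j y < (19 * V.size ^ 3 * (vnorm x + 1) : ℕ)) π p x := by
  have hscc : ∀ i k, V.Reach (stateAt π p i) (stateAt π p k) := fun i k =>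
    (h.drop i).reach.trans (hback.trans (h.take k).reach)
  intro i hi
  rcases exists_pos_combination_or_form (N := V.size)
    (W := {w | ∃ k ≤ π.length, V.HasCycle n (stateAt π p k) w}) hsize
    (fun w ⟨_, _, hw⟩ => hw.vnorm_le) with
    ⟨w, ⟨k, -, hw⟩, w', ⟨k', -, hw'⟩, a, ha, b, hb, hpos⟩ | ⟨d, hd, hdN, hform⟩
  · obtain ⟨γ, hγ, hlen, hγpos⟩ :=
      exists_pos_cycle (hscc i k) (hscc k k') (hscc k' i) hw hw' ha hb hpos
    have hbound : 19 * n * V.size ^ 2 ≤ V.cycleBound H :=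
      Nat.le_mul_of_pos_right _ (Nat.pow_pos (Nat.succ_pos H))
    obtain ⟨j, hj⟩ := exists_proj_lt_of_pos_cycle hγ hlen hγpos
      fun ⟨γ, hγ, hlen, h⟩ => (hin i hi).2.2 ⟨γ, hγ, hlen.trans hbound, h⟩
    refine ⟨j, hj.trans_le ?_⟩
    calc ((19 * n * V.size ^ 2 : ℕ) * vassNorm V : ℤ) = (19 * V.size ^ 3 : ℕ) := by
          rw [pow_succ V.size 2]; nth_rw 3 [size]; push_cast; ring
      _ ≤ (19 * V.size ^ 3 * (vnorm x + 1) : ℕ) := by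
          exact_mod_cast Nat.le_mul_of_pos_right _ (Nat.succ_pos _)
  · obtain ⟨j, hj⟩ := h.along_exists_proj_le_of_form (hin.mono fun _ _ hy => hy.1) hd hdN
      (fun k hk w hw => hform w ⟨k, hk, hw⟩) i hi
    refine ⟨j, hj.trans_lt ?_⟩
    norm_cast
    have hN₂ : V.size ≤ V.size ^ 3 := Nat.le_self_pow (by norm_num) _
    have hN₃ : V.size ^ 2 ≤ V.size ^ 3 := Nat.pow_le_pow_right hsize (by norm_num)
    calc 2 * V.size * (vnorm x + V.size) = 2 * V.size * vnorm x + 2 * V.size ^ 2 := by ring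
      _ ≤ 2 * V.size ^ 3 * vnorm x + 2 * V.size ^ 3 := by gcongr
      _ < 19 * V.size ^ 3 * (vnorm x + 1) := by
        have := Nat.pow_pos (n := 3) hsize
        nlinarith [Nat.zero_le (V.size ^ 3 * vnorm x)]

lemma Walk.vnorm_le_of_reach_back (hsize : 0 < V.size) (h : V.Walk p π q) (hback : V.Reach q p)
    (hin : Along (V.Inert H) π p x) :
    vnorm (x + effect π) ≤ 42 * V.size ^ 4 * (vnorm x + 1) := by
  have hhook := h.vnorm_le_of_hook hin (h.along_exists_proj_lt hsize hback hin)
  have hM := V.vassNorm_le_size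
  have e₁ : V.size ^ 3 ≤ V.size ^ 4 := Nat.pow_le_pow_right hsize (by norm_num)
  have e₂ : V.size ≤ V.size ^ 4 := Nat.le_self_pow (by norm_num) _
  have : 1 ≤ V.size ^ 4 := Nat.one_le_pow _ _ hsize
  calc vnorm (x + effect π)
      ≤ vnorm x + 19 * V.size ^ 3 * (vnorm x + 1) + 2 * V.size +
          V.size * (19 * V.size ^ 3 * (vnorm x + 1) + 1) := by linarith
    _ ≤ V.size ^ 4 * vnorm x + 19 * V.size ^ 4 * (vnorm x + 1) + 3 * V.size ^ 4 +
          19 * V.size ^ 4 * (vnorm x + 1) := by nlinarith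
    _ ≤ 42 * V.size ^ 4 * (vnorm x + 1) := by nlinarith

/-! ### Growth of runs that enable no semi-positive cycle -/

/-- The number of control states reachable from `p`. -/
noncomputable def reachCount (V : VASS n) (p : Fin n) : ℕ := {r | V.Reach p r}.ncard

lemma reachCount_le (V : VASS n) (p : Fin n) : V.reachCount p ≤ n := by
  simpa [reachCount] using Set.ncard_le_card {r | V.Reach p r}

lemma reachCount_pos (V : VASS n) (p : Fin n) : 0 < V.reachCount p :=
  (Set.ncard_pos (Set.toFinite _)).2 ⟨p, Reach.refl p⟩

lemma Reach.reachCount_lt (h : V.Reach p q) (hback : ¬V.Reach q p) :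
    V.reachCount q < V.reachCount p :=
  Set.ncard_lt_ncard ⟨fun _ hr => h.trans hr, fun hsub => hback (hsub (Reach.refl p))⟩
    (Set.toFinite _)

/-- The factor by which a run enabling no semi-positive cycle can grow while it stays in one
strongly connected component and then leaves it. -/
def growth (V : VASS n) : ℕ := 44 * V.size ^ 4

lemma growth_pos (hsize : 0 < V.size) : 0 < V.growth :=
  Nat.mul_pos (by norm_num) (Nat.pow_pos hsize)

lemma Walk.vnorm_lt_growth_pow (hsize : 0 < V.size) (h : V.Walk p π q)
    (hin : Along (V.Inert H) π p x) :
    vnorm (x + effect π) + 1 ≤ V.growth ^ V.reachCount p * (vnorm x + 1) := by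
  induction hc : V.reachCount p using Nat.strong_induction_on generalizing p π x with
  | _ c ih =>
  subst hc
  have hpow : 1 ≤ V.size ^ 4 := Nat.one_le_pow _ _ hsize
  obtain ⟨s, hs, hback, hlast⟩ := exists_last (P := fun i => V.Reach (stateAt π p i) p)
    (by rw [stateAt_zero]; exact Reach.refl p) π.length
  have hcomp : vnorm (vecAt π x s) ≤ 42 * V.size ^ 4 * (vnorm x + 1) :=
    (h.take s).vnorm_le_of_reach_back hsize hback (hin.take s)
  rcases hs.eq_or_lt with rfl | hs
  · rw [vecAt_length] at hcomp
    calc vnorm (x + effect π) + 1 ≤ V.growth ^ 1 * (vnorm x + 1) := by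
          rw [growth]; nlinarith
      _ ≤ V.growth ^ V.reachCount p * (vnorm x + 1) := by
          gcongr
          · exact growth_pos hsize
          · exact V.reachCount_pos p
  · have hleave : vnorm (vecAt π x (s + 1)) + 1 ≤ V.growth * (vnorm x + 1) := by
      have hstep := h.vnorm_vecAt_succ_le x hs
      have hM : vassNorm V ≤ V.size ^ 4 :=
        V.vassNorm_le_size.trans (Nat.le_self_pow (by norm_num) _)
      rw [growth]
      nlinarith
    have hlt : V.reachCount (stateAt π p (s + 1)) < V.reachCount p :=
      (h.take (s + 1)).reach.reachCount_lt (hlast (s + 1) (by omega) hs)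
    have hrest := ih _ hlt (h.drop (s + 1)) (hin.drop (s + 1)) rfl
    rw [vecAt_add_effect_drop] at hrest
    calc vnorm (x + effect π) + 1
        ≤ V.growth ^ V.reachCount (stateAt π p (s + 1)) * (V.growth * (vnorm x + 1)) :=
          hrest.trans (by gcongr)
      _ = V.growth ^ (V.reachCount (stateAt π p (s + 1)) + 1) * (vnorm x + 1) := by ring
      _ ≤ V.growth ^ V.reachCount p * (vnorm x + 1) := by
          gcongr
          · exact growth_pos hsize
          · exact hlt

lemma Walk.vnorm_lt_of_source_zero (hsize : 0 < V.size) (h : V.Walk p π q)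
    (hin : Along (V.Inert H) π p 0) : vnorm (effect π) < V.growth ^ n := by
  have hgrowth := h.vnorm_lt_growth_pow hsize hin
  rw [zero_add] at hgrowth
  calc vnorm (effect π) < V.growth ^ V.reachCount p * (vnorm 0 + 1) := hgrowth
    _ = V.growth ^ V.reachCount p := by simp [vnorm]
    _ ≤ V.growth ^ n := Nat.pow_le_pow_right (growth_pos hsize) (V.reachCount_le p)

/-- A side of the box that contains every run from `0` up to its first configuration enabling a
semi-positive cycle. -/
def boxBound (V : VASS n) : ℕ := V.growth ^ n + vassNorm V

lemma Walk.exists_enablesSemiPosCycle (hsize : 0 < V.size) (h : V.Walk p π q)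
    (hnn : Along (fun _ y => 0 ≤ y) π p 0) (hlarge : V.growth ^ n ≤ vnorm (effect π)) :
    ∃ k ≤ π.length, (∀ i ≤ k, vnorm (vecAt π 0 i) ≤ V.boxBound) ∧
      V.EnablesSemiPosCycle (V.cycleBound V.boxBound) (stateAt π p k) (vecAt π 0 k) := by
  classical
  have hex : ∃ k, k ≤ π.length ∧ ¬V.Inert V.boxBound (stateAt π p k) (vecAt π 0 k) := by
    by_contra! hin
    exact (h.vnorm_lt_of_source_zero hsize hin).not_ge hlarge
  obtain ⟨k, ⟨hk, hnot⟩, hfirst⟩ : ∃ k, (k ≤ π.length ∧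
      ¬V.Inert V.boxBound (stateAt π p k) (vecAt π 0 k)) ∧
      ∀ i < k, V.Inert V.boxBound (stateAt π p i) (vecAt π 0 i) :=
    ⟨Nat.find hex, Nat.find_spec hex, fun i hi => by
      by_contra hnot
      exact Nat.find_min hex hi ⟨hi.le.trans (Nat.find_spec hex).1, hnot⟩⟩
  have hbox : vnorm (vecAt π 0 k) ≤ V.boxBound := by
    cases k with
    | zero => simp [vecAt_zero, vnorm]
    | succ k =>
      have hpre := (h.take k).vnorm_lt_of_source_zero (H := V.boxBound) hsize fun i hi => by
        have hik : i ≤ k := by simp at hi; omega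
        rw [stateAt_take hik, vecAt_take hik]
        exact hfirst i (by omega)
      have hstep := h.vnorm_vecAt_succ_le 0 hk
      rw [← zero_add (effect _), ← vecAt] at hpre
      rw [boxBound]
      omega
  refine ⟨k, hk, fun i hi => ?_, ?_⟩
  · rcases hi.eq_or_lt with rfl | hi
    · exact hbox
    · exact (hfirst i hi).2.1
  · by_contra hno
    exact hnot ⟨hnn k hk, hbox, hno⟩

end VASS

/-! ### Turning towards a far vector -/

/-- The vector `u` lies in the interior of the cone spanned by `m` and `w`, provided that cone is
not a half-plane or more. -/
def StrictlyBetween (m u w : Vec2) : Prop :=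
  ∃ σ : ℤˣ, 0 < area σ m u ∧ 0 < area σ m w ∧ 0 < area σ u w

lemma area_pos_trans {σ : ℤˣ} {m w z : Vec2} (hm : SemiPos m) (hw : SemiPos w) (hz : 0 ≤ z)
    (hmw : 0 < area σ m w) (hwz : 0 < area σ w z) : 0 < area σ m z := by
  have hz' : 0 ≤ z.1 + z.2 := add_nonneg hz.1 hz.2
  have key : (w.1 + w.2) * area σ m z = area σ m w * (z.1 + z.2) + area σ w z * (m.1 + m.2) := by
    simp only [area_apply]; ring
  refine pos_of_mul_pos_right ?_ hw.sum_pos.le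
  rw [key]
  exact add_pos_of_nonneg_of_pos (mul_nonneg hmw.le hz') (mul_pos hwz hm.sum_pos)

/-- The nonnegative vectors of norm at most `N` on the positive side of `m`. -/
noncomputable def turns (σ : ℤˣ) (N : ℕ) (m : Vec2) : Finset Vec2 :=
  {w ∈ Finset.Icc 0 (N, N) | 0 < area σ m w}

lemma card_turns_le (σ : ℤˣ) (N : ℕ) (m : Vec2) : (turns σ N m).card ≤ (N + 1) ^ 2 :=
  (Finset.card_filter_le _ _).trans_eq (by simp [Finset.card_Icc_prod, sq])

lemma card_turns_lt {σ : ℤˣ} {N : ℕ} {m w : Vec2} (hm : SemiPos m) (hw : SemiPos w)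
    (hwN : vnorm w ≤ N) (hmw : 0 < area σ m w) : (turns σ N w).card < (turns σ N m).card := by
  refine Finset.card_lt_card (Finset.ssubset_iff_of_subset (fun z hz => ?_) |>.2 ⟨w, ?_, ?_⟩)
  · obtain ⟨hzN, hwz⟩ := Finset.mem_filter.1 hz
    exact Finset.mem_filter.2 ⟨hzN, area_pos_trans hm hw (Finset.mem_Icc.1 hzN).1 hmw hwz⟩
  · have hle := vnorm_le_iff.1 hwN
    exact Finset.mem_filter.2 ⟨Finset.mem_Icc.2 ⟨hw.nonneg, (abs_le.1 hle.1).2,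
      (abs_le.1 hle.2).2⟩, hmw⟩
  · simp [turns, area_apply, mul_comm]

namespace VASS

variable {n : ℕ} {V : VASS n} {p q : Fin n} {π : List (Transition n)} {x m : Vec2} {σ : ℤˣ}

lemma Walk.area_le_of_forall_cycle (h : V.Walk p π q) (hm : 0 ≤ m) {c : ℕ}
    (hx : area σ m x ≤ (m.1 + m.2) * c)
    (hcycle : ∀ k < π.length, ∀ w, V.HasCycle n (stateAt π p k) w → area σ m w ≤ 0) :
    area σ m (x + effect π) ≤ (m.1 + m.2) * (c + V.size : ℕ) := by
  have heff := h.dot_effect_le _ hcycle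
  rw [abs_add_abs_area_form σ hm] at heff
  rw [map_add]
  push_cast
  rw [mul_add]
  exact add_le_add hx heff

lemma Walk.exists_cycle_area_pos (h : V.Walk p π q) (hm : 0 ≤ m) {c : ℕ}
    (hx : area σ m x ≤ (m.1 + m.2) * c)
    (hfar : (m.1 + m.2) * (c + V.size : ℕ) < area σ m (x + effect π)) :
    ∃ t ≤ π.length, ∃ w, V.HasCycle n (stateAt π p t) w ∧ 0 < area σ m w ∧
      area σ m (vecAt π x t) ≤ (m.1 + m.2) * (c + V.size : ℕ) := by
  classical
  have hex : ∃ t, t < π.length ∧ ∃ w, V.HasCycle n (stateAt π p t) w ∧ 0 < area σ m w := by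
    by_contra! hno
    exact (h.area_le_of_forall_cycle hm hx hno).not_gt hfar
  obtain ⟨ht, w, hw, hmw⟩ := Nat.find_spec hex
  refine ⟨Nat.find hex, ht.le, w, hw, hmw,
    (h.take _).area_le_of_forall_cycle hm hx fun k hk z hz => ?_⟩
  rw [List.length_take, lt_min_iff] at hk
  rw [stateAt_take hk.1.le] at hz
  by_contra! hmz
  exact Nat.find_min hex hk.1 ⟨hk.2, z, hz, hmz⟩

/-- A walk ends on the positive side of `m` only by following cycles that turn to that side. The
first such cycle either passes beyond the target `u`, or it replaces `m`, and `u` is still on its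
positive side. -/
lemma Walk.exists_strictlyBetween {u : Vec2} {c C L : ℕ} (h : V.Walk p π q)
    (hnn : Along (fun _ y => 0 ≤ y) π p x) (hu : x + effect π = u) (hm : SemiPos m)
    (hmc : V.HasCycle L p m) (hL : n ≤ L) (hmu : (m.1 + m.2) * C < area σ m u)
    (hx : area σ m x ≤ (m.1 + m.2) * c)
    (hC : c + V.size * ((turns σ V.size m).card + 1) ≤ C)
    (hfar : ∀ w, SemiPos w → vnorm w ≤ V.size → (w.1 + w.2) * C < |area σ w u|) :
    ∃ ρ ρ' ρ'' s t m' w, π = ρ ++ (ρ' ++ ρ'') ∧ V.Walk p ρ s ∧ V.Walk s ρ' t ∧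
      V.HasCycle L s m' ∧ V.HasCycle n t w ∧ SemiPos m' ∧ StrictlyBetween m' u w := by
  induction hcard : (turns σ V.size m).card using Nat.strong_induction_on
    generalizing p π x m c with
  | _ k ih =>
  subst hcard
  have hu₀ : 0 ≤ u := hu ▸ hnn.target
  have hmu₀ : 0 < area σ m u := (mul_nonneg hm.sum_pos.le (Nat.cast_nonneg C)).trans_lt hmu
  have hcC : c + V.size ≤ C := by nlinarith
  obtain ⟨t, ht, w, hw, hmw, hpos⟩ := h.exists_cycle_area_pos hm.nonneg hx <|
    (mul_le_mul_of_nonneg_left (Nat.cast_le.2 hcC) hm.sum_pos.le).trans_lt (hu ▸ hmu)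
  rcases lt_or_ge 0 (area σ u w) with huw | hwu
  · exact ⟨[], π.take t, π.drop t, p, _, m, w, by simp, rfl, h.take t, hmc, hw, hm,
      σ, hmu₀, hmw, huw⟩
  rw [area_swap, neg_nonpos] at hwu
  have hw₀ : SemiPos w := semiPos_of_area hm.nonneg hu₀ hmu₀ hmw hwu
  have hturn : area σ w (vecAt π x t) ≤ (w.1 + w.2) * (c + V.size : ℕ) := by
    refine area_le_of_turn hw₀ hm (hnn t ht) ?_ hpos
    rw [area_swap]
    exact neg_nonpos.2 hmw.le
  have hlt := card_turns_lt hm hw₀ hw.vnorm_le hmw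
  obtain ⟨ρ, ρ', ρ'', r, s, m', w', hπ, hρ, hρ', hm'c, hw', hm', hbetween⟩ :=
    ih _ hlt (h.drop t) (hnn.drop t) ((vecAt_add_effect_drop π x t).trans hu) hw₀ (hw.mono hL)
      (by simpa [abs_of_nonneg hwu] using hfar w hw₀ hw.vnorm_le) hturn (by nlinarith) rfl
  exact ⟨π.take t ++ ρ, ρ', ρ'', r, s, m', w', by rw [List.append_assoc, ← hπ,
    List.take_append_drop], (h.take t).append hρ, hρ', hm'c, hw', hm', hbetween⟩

end VASS

/-! ### Belts -/

/-- The vector `u` is far from every direction of norm at most `A`: as a measure of the distance to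
the ray of `m` serves the upper bound `|area 1 m u| / vnorm m` of `distToRay_mul_vnorm_le`. -/
def Far (A : ℕ) (u : Vec2) : Prop :=
  ∀ m, SemiPos m → vnorm m ≤ A → A * vnorm m < |area 1 m u|

lemma distToRay_le (u v : Vec2) {a : ℝ} (ha : 0 ≤ a) :
    distToRay u v ≤ √((u.1 - a * v.1) ^ 2 + (u.2 - a * v.2) ^ 2) := by
  have hmem : a • toE v ∈ rayE v := ⟨a, ha, rfl⟩
  refine (Metric.infDist_le_dist_of_mem hmem).trans_eq ?_
  simp [EuclideanSpace.dist_eq, toE, Fin.sum_univ_two, Real.dist_eq, sq_abs]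

lemma distToRay_mul_vnorm_le {u m : Vec2} (hu : 0 ≤ u) (hm : SemiPos m) :
    distToRay u m * vnorm m ≤ |area 1 m u| := by
  have hu₁ : (0 : ℝ) ≤ u.1 := by exact_mod_cast hu.1
  have hu₂ : (0 : ℝ) ≤ u.2 := by exact_mod_cast hu.2
  obtain ⟨h₁, h₂, h⟩ := hm
  have harea : ((|area 1 m u| : ℤ) : ℝ) = |(m.1 : ℝ) * u.2 - m.2 * u.1| := by simp [area_apply]
  rw [harea]
  rcases le_total m.2 m.1 with hle | hle
  · have hpos : (0 : ℝ) < m.1 := by exact_mod_cast (show 0 < m.1 by omega)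
    have hnorm : (vnorm m : ℝ) = m.1 := by exact_mod_cast (show (vnorm m : ℤ) = m.1 by
      simp only [vnorm]; omega)
    have hdist := distToRay_le u m (div_nonneg hu₁ hpos.le)
    rw [div_mul_cancel₀ _ hpos.ne', sub_self, zero_pow two_ne_zero, zero_add,
      Real.sqrt_sq_eq_abs] at hdist
    calc distToRay u m * vnorm m ≤ |(u.2 : ℝ) - u.1 / m.1 * m.2| * |(m.1 : ℝ)| := by
          rw [hnorm, abs_of_pos hpos]; gcongr
      _ = |(m.1 : ℝ) * u.2 - m.2 * u.1| := by rw [← abs_mul]; congr 1; field_simp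
  · have hpos : (0 : ℝ) < m.2 := by exact_mod_cast (show 0 < m.2 by omega)
    have hnorm : (vnorm m : ℝ) = m.2 := by exact_mod_cast (show (vnorm m : ℤ) = m.2 by
      simp only [vnorm]; omega)
    have hdist := distToRay_le u m (div_nonneg hu₂ hpos.le)
    rw [div_mul_cancel₀ _ hpos.ne', sub_self, zero_pow two_ne_zero, add_zero,
      Real.sqrt_sq_eq_abs] at hdist
    calc distToRay u m * vnorm m ≤ |(u.1 : ℝ) - u.2 / m.2 * m.1| * |(m.2 : ℝ)| := by
          rw [hnorm, abs_of_pos hpos]; gcongr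
      _ = |(m.1 : ℝ) * u.2 - m.2 * u.1| := by
          rw [← abs_mul, abs_sub_comm]; congr 1; field_simp

lemma exists_far_of_not_isThin {n A : ℕ} {π : List (Transition n)} {x : Vec2}
    (hnn : ∀ i ≤ π.length, 0 ≤ vecAt π x i) (h : ¬IsThin A π x) :
    ∃ i ≤ π.length, Far A (vecAt π x i) := by
  contrapose! h
  intro i hi
  have hnear := h i hi
  simp only [Far, not_forall, not_lt] at hnear
  obtain ⟨m, hm, hmA, harea⟩ := hnear
  have hpos : (0 : ℝ) < vnorm m := by exact_mod_cast hm.vnorm_pos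
  refine ⟨m, hm.nonneg, hmA, A, le_rfl, hnn i hi, le_of_mul_le_mul_right ?_ hpos⟩
  exact (distToRay_mul_vnorm_le (hnn i hi) hm).trans (by exact_mod_cast harea)

namespace Far

variable {A : ℕ} {u : Vec2}

lemma lt_fst (h : Far A u) (hA : 1 ≤ A) (hu : 0 ≤ u) : A < u.1 := by
  simpa [area_apply, vnorm, abs_of_nonneg (show 0 ≤ u.1 from hu.1)] using
    h (0, 1) (by simp [SemiPos]) (by simpa [vnorm] using hA)

lemma lt_snd (h : Far A u) (hA : 1 ≤ A) (hu : 0 ≤ u) : A < u.2 := by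
  simpa [area_apply, vnorm, abs_of_nonneg (show 0 ≤ u.2 from hu.2)] using
    h (1, 0) (by simp [SemiPos]) (by simpa [vnorm] using hA)

lemma mul_lt_abs_area (h : Far A u) {C : ℕ} (hC : 2 * C ≤ A) {m : Vec2} (hm : SemiPos m)
    (hmA : vnorm m ≤ A) : (m.1 + m.2) * C < |area 1 m u| := by
  refine lt_of_le_of_lt ?_ (h m hm hmA)
  have h₁ := (le_abs_self _).trans (abs_fst_le_vnorm m)
  have h₂ := (le_abs_self _).trans (abs_snd_le_vnorm m)
  calc (m.1 + m.2) * C ≤ (vnorm m + vnorm m) * C := by gcongr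
    _ = (2 * C : ℕ) * vnorm m := by push_cast; ring
    _ ≤ A * vnorm m := by gcongr

end Far

/-! ### Sequential cones -/

lemma add_mem_seqCone {v v' m w : Vec2} {a b : ℚ} (ha : 0 ≤ a) (hb : 0 ≤ b) (hm : 0 ≤ toQ m)
    (h : 0 ≤ a • toQ m + b • toQ w) : a • toQ m + b • toQ w ∈ SeqCone [v, v', m, w] := by
  refine ⟨![0, 0, a, b], fun i => ?_, fun k hk => ?_, by simp [Fin.sum_univ_four]⟩
  · fin_cases i <;> simp [ha, hb]
  · simp only [List.length_cons, List.length_nil] at hk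
    interval_cases k
    · simp
    · simp
    · simp [Fin.sum_univ_four]
    · simpa [Fin.sum_univ_four] using smul_nonneg ha hm
    · simpa [Fin.sum_univ_four] using h

lemma toQ_nonneg_s3 {v : Vec2} (hv : 0 ≤ v) : 0 ≤ toQ v :=
  ⟨Int.cast_nonneg hv.1, Int.cast_nonneg hv.2⟩

lemma toQ_mem_seqCone {σ : ℤˣ} {m w y : Vec2} (v v' : Vec2) (hm : 0 ≤ m) (hy : 0 ≤ y)
    (hmw : 0 < area σ m w) (hmy : 0 ≤ area σ m y) (hyw : 0 ≤ area σ y w) :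
    toQ y ∈ SeqCone [v, v', m, w] := by
  have hcramer : toQ y = ((area σ y w : ℚ) / area σ m w) • toQ m +
      ((area σ m y : ℚ) / area σ m w) • toQ w := by
    have hne : (area σ m w : ℚ) ≠ 0 := Int.cast_ne_zero.2 hmw.ne'
    ext
    · simp only [toQ, Prod.fst_add, Prod.smul_fst, smul_eq_mul]
      field_simp
      simp only [area_apply]
      push_cast
      ring
    · simp only [toQ, Prod.snd_add, Prod.smul_snd, smul_eq_mul]
      field_simp
      simp only [area_apply]
      push_cast
      ring
  have hy' := toQ_nonneg_s3 hy
  rw [hcramer] at hy' ⊢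
  exact add_mem_seqCone (div_nonneg (Int.cast_nonneg hyw) (Int.cast_nonneg hmw.le))
    (div_nonneg (Int.cast_nonneg hmy) (Int.cast_nonneg hmw.le)) (toQ_nonneg_s3 hm) hy'

lemma eventually_map_nsmul_add_nonneg {G : Type*} [AddCommMonoid G] (f : G →+ ℤ) {u : G}
    (hu : 0 < f u) (e : G) : ∀ᶠ K : ℕ in Filter.atTop, 0 ≤ f (K • u + e) := by
  filter_upwards [Filter.eventually_ge_atTop (f e).natAbs] with K hK
  rw [map_add, map_nsmul, nsmul_eq_mul]
  have hK' : -f e ≤ K := by omega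
  nlinarith

lemma StrictlyBetween.eventually_mem_seqCone {m u w e : Vec2} (h : StrictlyBetween m u w)
    (v v' : Vec2) (hm : 0 ≤ m) (hu : 0 ≤ u) (he : 0 ≤ e) :
    ∀ᶠ K : ℕ in Filter.atTop, toQ (K • u + e) ∈ SeqCone [v, v', m, w] := by
  obtain ⟨σ, hmu, hmw, huw⟩ := h
  filter_upwards [eventually_map_nsmul_add_nonneg (area σ m) hmu e,
    eventually_map_nsmul_add_nonneg (-area σ w) (by rwa [area_swap] at huw) e] with K h₁ h₂
  refine toQ_mem_seqCone v v' hm (add_nonneg (nsmul_nonneg hu K) he) hmw h₁ ?_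
  rwa [area_swap]

lemma rayQ_toQ_ne {x y : Vec2} (h : area 1 x y ≠ 0) : rayQ (toQ x) ≠ rayQ (toQ y) := by
  intro heq
  obtain ⟨a, -, ha⟩ : toQ y ∈ rayQ (toQ x) := heq ▸ ⟨1, zero_le_one, (one_smul _ _).symm⟩
  have h₁ : (y.1 : ℚ) = a * x.1 := congrArg Prod.fst ha
  have h₂ : (y.2 : ℚ) = a * x.2 := congrArg Prod.snd ha
  refine h (Int.cast_injective (α := ℚ) ?_)
  simp only [area_apply, Units.val_one]
  push_cast
  rw [h₁, h₂]
  ring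

lemma toQ_ne_zero {v : Vec2} (h : v.2 ≠ 0) : toQ v ≠ 0 := fun h₀ =>
  h (Int.cast_eq_zero.1 (congrArg Prod.snd h₀))

lemma nonTrivial_inter_seqCone {u v m w v' m' w' : Vec2} (hu : 0 ≤ u) (hu₂ : 0 < u.2)
    (hm : 0 ≤ m) (h : StrictlyBetween m u w) (hm' : 0 ≤ m') (h' : StrictlyBetween m' u w') :
    NonTrivial (SeqCone [v, v, m, w] ∩ SeqCone [v', v', m', w']) := by
  have hmem : ∀ e : Vec2, 0 ≤ e → ∀ᶠ K : ℕ in Filter.atTop,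
      toQ (K • u + e) ∈ SeqCone [v, v, m, w] ∩ SeqCone [v', v', m', w'] := fun e he =>
    (h.eventually_mem_seqCone v v hm hu he).and (h'.eventually_mem_seqCone v' v' hm' hu he)
  obtain ⟨K, ⟨h₀, h₁⟩, hK⟩ := ((hmem 0 le_rfl).and (hmem (1, 0) ⟨zero_le_one, le_rfl⟩)).and
    (Filter.eventually_gt_atTop 0) |>.exists
  have hK₂ : (K : ℤ) * u.2 ≠ 0 := (mul_pos (Int.natCast_pos.2 hK) hu₂).ne'
  refine ⟨_, h₀, _, h₁, toQ_ne_zero (by simpa using hK₂), toQ_ne_zero (by simpa using hK₂),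
    rayQ_toQ_ne ?_⟩
  simpa [area_apply, mul_add, mul_comm, mul_left_comm] using hK₂

/-! ### Sequentially enabled cycles -/

lemma SemiPos.exists_proj_eq_zero {v : Vec2} (h : SemiPos v) (hv : ¬Pos v) :
    ∃ j, proj j v = 0 := by
  obtain ⟨h₁, h₂, -⟩ := h
  by_contra! hne
  exact hv ⟨h₁.lt_of_ne' (hne 0), h₂.lt_of_ne' (hne 1)⟩

namespace VASS

variable {n : ℕ} {V : VASS n} {p q r s t : Fin n} {x : Vec2} {A : ℕ}

/-- The factor `ρ₂` of the definition is taken empty, and the first two cycles coincide. -/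
lemma seqEnabled_of_walks {ρ₁ ρ₃ ρ₄ ρ₅ γ : List (Transition n)} {m w : Vec2}
    (h₁ : V.Walk p ρ₁ r) (h₃ : V.Walk r ρ₃ s) (h₄ : V.Walk s ρ₄ t)
    (hbound : ∀ i ≤ ρ₁.length, vnorm (vecAt ρ₁ x i) ≤ A) (hγ : V.Walk r γ r)
    (hlen : γ.length ≤ A) (hpos : SemiPos (effect γ))
    (hnn : Along (fun _ y => 0 ≤ y) γ r (x + effect ρ₁))
    (hm : V.HasCycle A s m) (hw : V.HasCycle A t w) :
    SeqEnabled V A (ρ₁ ++ (ρ₃ ++ (ρ₄ ++ ρ₅))) p x (effect γ) (effect γ) m w := by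
  obtain ⟨μ, hμ, hμlen, hμwalk, rfl⟩ := hm
  obtain ⟨ω, hω, hωlen, hωwalk, rfl⟩ := hw
  have hne : γ ≠ [] := by rintro rfl; simp [effect, SemiPos] at hpos
  have hstate₁ : stateAt (ρ₁ ++ (ρ₃ ++ (ρ₄ ++ ρ₅))) p ρ₁.length = r := by
    rw [stateAt_append_left le_rfl]; exact h₁.endState_eq
  have hstate₃ : stateAt (ρ₁ ++ (ρ₃ ++ (ρ₄ ++ ρ₅))) p (ρ₁.length + ρ₃.length) = s := by
    rw [stateAt_append_right, stateAt_append_left le_rfl, h₁.endState_eq]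
    exact h₃.endState_eq
  have hstate₄ :
      stateAt (ρ₁ ++ (ρ₃ ++ (ρ₄ ++ ρ₅))) p (ρ₁.length + ρ₃.length + ρ₄.length) = t := by
    rw [add_assoc, stateAt_append_right, stateAt_append_right, stateAt_append_left le_rfl,
      h₁.endState_eq, h₃.endState_eq]
    exact h₄.endState_eq
  have hvec {i : ℕ} (hi : i ≤ ρ₁.length) :
      vecAt (ρ₁ ++ (ρ₃ ++ (ρ₄ ++ ρ₅))) x i = vecAt ρ₁ x i := vecAt_append_left hi x
  have hproj {i : ℕ} (hi : i ≤ ρ₁.length) (j : Fin 2) : proj j (vecAt ρ₁ x i) ≤ A :=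
    (le_abs_self _).trans ((abs_proj_le_vnorm j _).trans (Nat.cast_le.2 (hbound i hi)))
  refine ⟨ρ₁, [], ρ₃, ρ₄, ρ₅, γ, γ, μ, ω, by simp, hγ.isCycle hne, hγ.isCycle hne,
    hμwalk.isCycle hμ, hωwalk.isCycle hω, hlen, hlen, hμlen, hωlen, rfl, rfl, rfl, rfl, hpos, ?_⟩
  simp only [List.length_nil, add_zero, hstate₁, hstate₃, hstate₄, hvec le_rfl, vecAt_length]
  refine ⟨⟨hγ.startsAt, hnn⟩, fun i hi => ?_, fun _ => hγ.startsAt, fun hv => ?_,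
    hμwalk.startsAt, hωwalk.startsAt⟩
  · rw [hvec hi]
    exact ⟨hproj hi 0, hproj hi 1⟩
  · obtain ⟨j, hj⟩ := hpos.exists_proj_eq_zero hv
    refine ⟨j, hj, ⟨hγ.startsAt, fun i hi => proj_nonneg j (hnn i hi)⟩, fun i _ hi => ?_⟩
    rw [hvec hi]
    exact hproj hi j

/-- A threshold for `A` from which runs to `A`-far vectors have `A`-sequentially enabled cycles.
It bounds the length and the effect of the first cycle, of order `nN²G²` and `N³G²` with
`N = V.size` and `G = V.growth ^ n`, and exceeds twice the drift allowed by `two_mul_drift_le`. -/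
def thickBound (V : VASS n) : ℕ := 171 * V.size ^ 3 * (V.growth ^ n) ^ 2

lemma le_size (hsize : 0 < V.size) : n ≤ V.size :=
  Nat.le_mul_of_pos_right _ (Nat.pos_of_mul_pos_left hsize)

lemma size_le_growth_pow (hsize : 0 < V.size) : V.size ≤ V.growth ^ n := by
  have hn : n ≠ 0 := by rintro rfl; simp [size] at hsize
  calc V.size ≤ V.size ^ 4 := Nat.le_self_pow (by norm_num) _
    _ ≤ V.growth := Nat.le_mul_of_pos_left _ (by norm_num)
    _ ≤ V.growth ^ n := Nat.le_self_pow hn _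

lemma boxBound_lt (hsize : 0 < V.size) : V.boxBound < 3 * V.growth ^ n := by
  have hgrowth := size_le_growth_pow hsize
  have hM := V.vassNorm_le_size
  rw [boxBound]
  omega

lemma cycleBound_mul_le (hsize : 0 < V.size) {k : ℕ} (hk : n * k ≤ V.size) :
    V.cycleBound V.boxBound * k ≤ V.thickBound := by
  calc V.cycleBound V.boxBound * k = 19 * (n * k) * V.size ^ 2 * (V.boxBound + 1) ^ 2 := by
        rw [cycleBound]; ring
    _ ≤ 19 * V.size * V.size ^ 2 * (3 * V.growth ^ n) ^ 2 := by
        gcongr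
        exact boxBound_lt hsize
    _ = V.thickBound := by rw [thickBound]; ring

lemma cycleBound_le (hsize : 0 < V.size) : V.cycleBound V.boxBound ≤ V.thickBound := by
  simpa using cycleBound_mul_le (k := 1) hsize (by simpa using le_size hsize)

lemma size_le_thickBound (hsize : 0 < V.size) : V.size ≤ V.thickBound := by
  have hG : 0 < (V.growth ^ n) ^ 2 := Nat.pow_pos (Nat.pow_pos (growth_pos hsize))
  calc V.size ≤ V.size ^ 3 := Nat.le_self_pow (by norm_num) _
    _ ≤ 171 * V.size ^ 3 := Nat.le_mul_of_pos_left _ (by norm_num)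
    _ ≤ V.thickBound := Nat.le_mul_of_pos_right _ hG

lemma growth_pow_le_thickBound (hsize : 0 < V.size) : V.growth ^ n ≤ V.thickBound :=
  (Nat.le_self_pow two_ne_zero _).trans
    (Nat.le_mul_of_pos_left _ (Nat.mul_pos (by norm_num) (Nat.pow_pos hsize)))

lemma two_mul_drift_le (hsize : 0 < V.size) :
    2 * (V.boxBound + V.size * ((V.size + 1) ^ 2 + 1)) ≤ V.thickBound := by
  have hbox := boxBound_lt hsize
  have hG : V.growth ^ n ≤ (V.growth ^ n) ^ 2 := Nat.le_self_pow two_ne_zero _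
  have hG₁ : 1 ≤ (V.growth ^ n) ^ 2 := Nat.pow_pos (Nat.pow_pos (growth_pos hsize))
  have hN : 1 ≤ V.size ^ 3 := Nat.one_le_pow _ _ hsize
  calc 2 * (V.boxBound + V.size * ((V.size + 1) ^ 2 + 1))
      ≤ 2 * (3 * V.growth ^ n + V.size * ((V.size + V.size) ^ 2 + V.size ^ 2)) := by
        gcongr
        · exact hsize
        · exact Nat.one_le_pow _ _ hsize
    _ = 6 * (1 * V.growth ^ n) + 10 * (V.size ^ 3 * 1) := by ring
    _ ≤ 6 * (V.size ^ 3 * (V.growth ^ n) ^ 2) + 10 * (V.size ^ 3 * (V.growth ^ n) ^ 2) := by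
        gcongr
    _ ≤ V.thickBound := by
        rw [thickBound, mul_assoc 171, ← add_mul]
        gcongr
        norm_num

lemma Walk.exists_strictlyBetween_of_far {π : List (Transition n)} {u m : Vec2}
    (hsize : 0 < V.size) (hA : V.thickBound ≤ A) (h : V.Walk p π q)
    (hnn : Along (fun _ y => 0 ≤ y) π p x) (hu : x + effect π = u) (hfar : Far A u)
    (hx : vnorm x ≤ V.boxBound) (hm : SemiPos m) (hmA : vnorm m ≤ A) (hmc : V.HasCycle A p m) :
    ∃ ρ ρ' ρ'' s t m' w, π = ρ ++ (ρ' ++ ρ'') ∧ V.Walk p ρ s ∧ V.Walk s ρ' t ∧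
      V.HasCycle A s m' ∧ V.HasCycle n t w ∧ SemiPos m' ∧ StrictlyBetween m' u w := by
  have hN : V.size ≤ A := (size_le_thickBound hsize).trans hA
  have hC := (two_mul_drift_le hsize).trans hA
  obtain ⟨σ, hσ⟩ := exists_area_eq_abs m u
  exact h.exists_strictlyBetween hnn hu hm hmc ((le_size hsize).trans hN)
    (hσ ▸ hfar.mul_lt_abs_area hC hm hmA)
    ((area_le σ hm.nonneg x).trans
      (mul_le_mul_of_nonneg_left (Nat.cast_le.2 hx) hm.sum_pos.le))
    (by gcongr; exact card_turns_le σ V.size m)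
    (fun w hw hwN => abs_area σ w u ▸ hfar.mul_lt_abs_area hC hw (hwN.trans hN))

lemma Walk.exists_seqEnabled {π : List (Transition n)} (hsize : 0 < V.size)
    (hA : V.thickBound ≤ A) (h : V.Walk p π q) (hnn : Along (fun _ y => 0 ≤ y) π p 0)
    (hfar : Far A (effect π)) :
    ∃ v m w, SeqEnabled V A π p 0 v v m w ∧ SemiPos m ∧ StrictlyBetween m (effect π) w := by
  have hu : 0 ≤ effect π := by simpa using hnn.target
  have hN : V.size ≤ A := (size_le_thickBound hsize).trans hA
  have hlarge : V.growth ^ n ≤ vnorm (effect π) := by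
    refine ((growth_pow_le_thickBound hsize).trans hA).trans (Nat.cast_le (α := ℤ).1 ?_)
    exact (hfar.lt_fst (hsize.trans_le hN) hu).le.trans
      ((le_abs_self _).trans (abs_fst_le_vnorm _))
  obtain ⟨k, -, hbox, γ, hγ, hγlen, hγpos, hγnn⟩ := h.exists_enablesSemiPosCycle hsize hnn hlarge
  have hγA : vnorm (effect γ) ≤ A := hγ.vnorm_effect_le.trans <|
    (Nat.mul_le_mul_right _ hγlen).trans ((cycleBound_mul_le hsize le_rfl).trans hA)
  have hlen : γ.length ≤ A := hγlen.trans ((cycleBound_le hsize).trans hA)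
  have hne : γ ≠ [] := by rintro rfl; simp [effect, SemiPos] at hγpos
  obtain ⟨ρ₃, ρ₄, ρ₅, s, t, m, w, hπ, h₃, h₄, hm, hw, hmpos, hbetween⟩ :=
    (h.drop k).exists_strictlyBetween_of_far hsize hA (hnn.drop k)
      ((vecAt_add_effect_drop π 0 k).trans (zero_add _)) hfar (hbox k le_rfl) hγpos hγA
      ⟨γ, hne, hlen, hγ, rfl⟩
  refine ⟨effect γ, m, w, ?_, hmpos, hbetween⟩
  rw [← List.take_append_drop k π, hπ]
  refine seqEnabled_of_walks (h.take k) h₃ h₄ (fun i hi => ?_) hγ hlen hγpos hγnn hm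
    (hw.mono ((le_size hsize).trans hN))
  have hik := hi.trans (List.length_take_le k π)
  rw [vecAt_take hik]
  exact (hbox i hik).trans (by have := two_mul_drift_le hsize; omega)

end VASS

/-! ### Reversal -/

section Reversal

variable {n : ℕ} {V : VASS n} {p : Fin n} {π : List (Transition n)} {x : Vec2}

lemma revPath_cons (t : Transition n) (π : List (Transition n)) :
    revPath (t :: π) = revPath π ++ [revT t] := by
  simp [revPath]

lemma effect_revPath (π : List (Transition n)) : effect (revPath π) = -effect π := by
  induction π with
  | nil => simp [revPath, effect]
  | cons t π ih =>
    rw [revPath_cons, effect_append, ih, effect_cons]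
    simp [effect, revT]

lemma vecAt_revPath (π : List (Transition n)) (x : Vec2) (i : ℕ) :
    vecAt (revPath π) (x + effect π) i = vecAt π x (π.length - i) := by
  have htake : (revPath π).take i = revPath (π.drop (π.length - i)) := by
    simp [revPath, List.take_reverse]
  rw [vecAt, htake, effect_revPath, ← vecAt_add_effect_drop π x (π.length - i),
    add_neg_cancel_right]

lemma Along.revPath {P : Vec2 → Prop} (h : Along (fun _ y => P y) π p x) (q : Fin n) :
    Along (fun _ y => P y) (revPath π) q (x + effect π) := by
  intro i _
  rw [vecAt_revPath]
  exact h _ (Nat.sub_le _ _)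

lemma vassNorm_revV (V : VASS n) : vassNorm (revV V) = vassNorm V := by
  simp [vassNorm, revV, Finset.sup_image, Function.comp_def, revT, vnorm]

namespace VASS

lemma size_revV (V : VASS n) : (revV V).size = V.size := by
  rw [size, size, vassNorm_revV]

lemma thickBound_revV (V : VASS n) : (revV V).thickBound = V.thickBound := by
  simp only [thickBound, growth, size_revV]

lemma Walk.rev {q : Fin n} (h : V.Walk p π q) : (revV V).Walk q (revPath π) p := by
  induction π generalizing p with
  | nil => exact Eq.symm h
  | cons t π ih =>
    rw [revPath_cons]
    exact (ih h.2.2).append ⟨Finset.mem_image_of_mem _ h.1, rfl, h.2.1⟩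

end VASS

end Reversal

/-! ### The dichotomy -/

namespace VASS

variable {n : ℕ} {V : VASS n}

lemma isThick_of_far {π : List (Transition n)} {q : Fin n} {A i : ℕ} (hrun : IsZeroRun V π q)
    (hA : V.thickBound < A) (hfar : Far A (vecAt π 0 i)) : IsThick V A π q := by
  obtain ⟨⟨hpath, hstart, hnn⟩, hzero⟩ := hrun
  have hwalk : V.Walk q π (endState π q) := walk_of_isPath hpath hstart
  have hnn : Along (fun _ y => 0 ≤ y) π q 0 := hnn
  have hu : vecAt π 0 i = effect (π.take i) := zero_add _
  have hu' : vecAt π 0 i = effect (revPath (π.drop i)) := by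
    rw [effect_revPath, eq_neg_iff_add_eq_zero, vecAt_add_effect_drop, hzero, zero_add]
  have hu₀ : 0 ≤ vecAt π 0 i := (hnn.take i).target
  have hu₂ := (Nat.cast_nonneg A).trans_lt (hfar.lt_snd (Nat.one_le_of_lt hA) hu₀)
  have hsize : 0 < V.size := (hwalk.take i).size_pos fun h0 => by simp [hu, h0] at hu₂
  have hnn' : Along (fun _ y => 0 ≤ y) (revPath (π.drop i)) (endState π q) 0 := by
    simpa [vecAt_add_effect_drop, hzero] using (hnn.drop i).revPath (P := (0 ≤ ·)) (endState π q)
  obtain ⟨v, m, w, hseq, hm, hbetween⟩ :=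
    (hwalk.take i).exists_seqEnabled hsize hA.le (hnn.take i) (hu ▸ hfar)
  obtain ⟨v', m', w', hseq', hm', hbetween'⟩ :=
    (hwalk.drop i).rev.exists_seqEnabled (by rwa [size_revV]) (by rw [thickBound_revV]; exact hA.le)
      hnn' (hu' ▸ hfar)
  rw [← hu] at hbetween
  rw [← hu'] at hbetween'
  exact ⟨π.take i, π.drop i, (List.take_append_drop i π).symm, v, v, m, w, v', v', m', w', hseq,
    hseq', nonTrivial_inter_seqCone hu₀ hu₂ hm.nonneg hbetween hm'.nonneg hbetween'⟩

lemma thickBound_lt_pow (V : VASS n) :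
    V.thickBound < (171 * V.size ^ 3 * (44 * V.size ^ 4) ^ 2 + 1) ^ n := by
  rcases Nat.eq_zero_or_pos n with rfl | hn
  · simp [thickBound, size]
  · calc V.thickBound = 171 * V.size ^ 3 * ((44 * V.size ^ 4) ^ 2) ^ n := by
          rw [thickBound, growth, pow_right_comm]
      _ ≤ (171 * V.size ^ 3) ^ n * ((44 * V.size ^ 4) ^ 2) ^ n := by
          gcongr; exact Nat.le_self_pow hn.ne' _
      _ = (171 * V.size ^ 3 * (44 * V.size ^ 4) ^ 2) ^ n := (mul_pow _ _ _).symm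
      _ < (171 * V.size ^ 3 * (44 * V.size ^ 4) ^ 2 + 1) ^ n :=
          Nat.pow_lt_pow_left (Nat.lt_succ_self _) hn.ne'

end VASS

/-- Thin–Thick Dichotomy.  There is a polynomial `p` with
natural coefficients such that every (0,0)-run of a 2-VASS `V` with `n` control
states and norm `M` is either `p(nM)ⁿ`-thin or `p(nM)ⁿ`-thick. -/
theorem thin_thick_dichotomy :
    ∃ p : Polynomial ℕ, ∀ (n : ℕ) (V : VASS n) (π : List (Transition n)) (q : Fin n),
      IsZeroRun V π q →
      IsThin ((p.eval (n * vassNorm V)) ^ n) π (0 : Vec2) ∨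
      IsThick V ((p.eval (n * vassNorm V)) ^ n) π q := by
  refine ⟨171 * .X ^ 3 * (44 * .X ^ 4) ^ 2 + 1, fun n V π q hrun =>
    or_iff_not_imp_left.2 fun hthin => ?_⟩
  obtain ⟨i, -, hfar⟩ := exists_far_of_not_isThin hrun.1.2.2 hthin
  refine VASS.isThick_of_far hrun ?_ hfar
  simpa [VASS.size] using V.thickBound_lt_pow
end
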